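/- arXiv:2102.01188 — 8 statements merged into one kernel-verified Lean document; each statement's English description precedes it below -/
import Mathlib

section
/- Let $k \ge 1$. (i) For every $N$ with $1 \le N \le 4k$ there is no $(C_N,s)$-successful adaptive strategy with accuracy $s < N$, i.e. $s^*(C_N) = N$. (ii) For every $N \ge 4k+1$ there is no $(C_N,s)$-successful adaptive strategy with accuracy $s \le 4k$, i.e. $s^*(C_N) \ge 4k+1$. -/
/-!
The searcher is beaten by the adversary who always gives the answer that keeps the larger half
of the candidate set. Put `M = min N (4k + 1)`. On the cycle a nonempty set gains at least two
vertices per step until it is everything (`card_cycStep`), hence at least `2k` in `k` steps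
(`card_GammaC`). If the candidate set has at least `M` elements, the larger of the two parts has
at least `⌈M / 2⌉`, and after the move at least `min N (⌈M / 2⌉ + 2k) ≥ M` candidates remain,
because `M ≤ 4k + 1`. So no strategy reaches accuracy below `M` (`not_cycSuccessful`). Both parts
follow, since `M = N` for `N ≤ 4k` and `M = 4k + 1` for `N ≥ 4k + 1`; accuracy `N` is reached
with no test at all.
-/

open Finset

/-- One-step neighborhood on the cycle `C_N` (vertices `1..N`, loop at every vertex). -/
def cycStep (N : ℕ) (A : Finset ℕ) : Finset ℕ :=
  (Finset.Icc 1 N).filter fun j => ∃ i ∈ A, j = i ∨ i + 1 = j ∨ j + 1 = i ∨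
    (i = N ∧ j = 1) ∨ (i = 1 ∧ j = N)

/-- One-step neighborhood on the path `P_N` (vertices `1..N`, loop at every vertex). -/
def pathStep (N : ℕ) (A : Finset ℕ) : Finset ℕ :=
  (Finset.Icc 1 N).filter fun j => ∃ i ∈ A, j = i ∨ i + 1 = j ∨ j + 1 = i

/-- `k`-neighborhood on the cycle `C_N`. -/
def GammaC (N k : ℕ) (A : Finset ℕ) : Finset ℕ := (cycStep N)^[k] A

/-- `k`-neighborhood on the path `P_N`. -/
def GammaP (N k : ℕ) (A : Finset ℕ) : Finset ℕ := (pathStep N)^[k] A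

/-- Candidate sets `𝒟_i` for an adaptive strategy `σ` (mapping the list of previous
answers to the next test set), an answer sequence `y`, expansion `Γ`, and initial
candidate set `D0`. -/
def Dadapt (Γ : Finset ℕ → Finset ℕ) (σ : List Bool → Finset ℕ) (D0 : Finset ℕ)
    (y : ℕ → Bool) : ℕ → Finset ℕ
  | 0 => D0
  | i + 1 =>
      let D := Dadapt Γ σ D0 y i
      let T := σ ((List.range i).map y)
      if y i then Γ (T ∩ D) else Γ (D \ T)

/-- There is an adaptive strategy with `n` tests that is successful with accuracy `s`:
for every consistent answer sequence some candidate set has size at most `s`. -/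
def Successful (Γ : Finset ℕ → Finset ℕ) (D0 : Finset ℕ) (n s : ℕ) : Prop :=
  ∃ σ : List Bool → Finset ℕ, ∀ y : ℕ → Bool,
    (∀ i ≤ n, (Dadapt Γ σ D0 y i).Nonempty) →
    ∃ i ≤ n, (Dadapt Γ σ D0 y i).card ≤ s

/-- `(C_N, s)`-successful adaptive strategy with `n` tests exists. -/
def cycSuccessful (N k n s : ℕ) : Prop :=
  Successful (GammaC N k) (Finset.Icc 1 N) n s

/-- `(P_N, s)`-successful adaptive strategy with `n` tests exists. -/
def pathSuccessful (N k n s : ℕ) : Prop :=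
  Successful (GammaP N k) (Finset.Icc 1 N) n s

/-- `s^*(C_N)`: minimum accuracy achievable on the cycle. -/
noncomputable def sStarC (N k : ℕ) : ℕ := sInf {s | ∃ n, cycSuccessful N k n s}

/-- `s^*(P_N)`: minimum accuracy achievable on the path. -/
noncomputable def sStarP (N k : ℕ) : ℕ := sInf {s | ∃ n, pathSuccessful N k n s}

/-- The successor map `1 ↦ 2 ↦ ⋯ ↦ N ↦ 1` of the cycle. -/
def cycNext (N x : ℕ) : ℕ := if x = N then 1 else x + 1

/-- A set of vertices together with its successors. -/
def cycGrow (N : ℕ) (A : Finset ℕ) : Finset ℕ := A ∪ A.image (cycNext N)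

lemma cycNext_mem {N x : ℕ} (hx : x ∈ Icc 1 N) : cycNext N x ∈ Icc 1 N := by
  simp only [cycNext, mem_Icc] at *
  split_ifs <;> omega

lemma cycGrow_subset {N : ℕ} {A : Finset ℕ} (hA : A ⊆ Icc 1 N) : cycGrow N A ⊆ Icc 1 N := by
  refine union_subset hA fun y hy => ?_
  obtain ⟨x, hx, rfl⟩ := mem_image.1 hy
  exact cycNext_mem (hA hx)

/-- The successor map acts transitively on the cycle. -/
lemma eq_Icc_of_closed {N : ℕ} {A : Finset ℕ} (hA : A ⊆ Icc 1 N) (hne : A.Nonempty)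
    (hc : ∀ x ∈ A, cycNext N x ∈ A) : A = Icc 1 N := by
  have climb : ∀ a ∈ A, ∀ d, a + d ≤ N → a + d ∈ A := by
    intro a ha d
    induction d with
    | zero => intro _; exact ha
    | succ d ih =>
      intro hd
      have h := hc _ (ih (by omega))
      rwa [cycNext, if_neg (by omega)] at h
  obtain ⟨a, ha⟩ := hne
  have haN := mem_Icc.1 (hA ha)
  have hN : N ∈ A := by
    have h := climb a ha (N - a) (by omega)
    rwa [Nat.add_sub_cancel' haN.2] at h
  have h1 : 1 ∈ A := by
    have h := hc N hN
    rwa [cycNext, if_pos rfl] at h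
  refine hA.antisymm fun x hx => ?_
  rw [mem_Icc] at hx
  have h := climb 1 h1 (x - 1) (by omega)
  rwa [Nat.add_sub_cancel' hx.1] at h

lemma card_cycGrow {N : ℕ} {A : Finset ℕ} (hA : A ⊆ Icc 1 N) (hne : A.Nonempty) :
    min N (#A + 1) ≤ #(cycGrow N A) := by
  have hsub : A ⊆ cycGrow N A := subset_union_left
  by_cases h : cycGrow N A = A
  · have hAll : A = Icc 1 N := by
      refine eq_Icc_of_closed hA hne fun x hx => ?_
      rw [← h]
      exact mem_union_right _ (mem_image_of_mem _ hx)
    have hcard : #A = N := by rw [hAll]; simp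
    rw [h]
    omega
  · have := card_lt_card (hsub.ssubset_of_ne (Ne.symm h))
    omega

lemma cycStep_subset (N : ℕ) (A : Finset ℕ) : cycStep N A ⊆ Icc 1 N := filter_subset _ _

/-- Shifted by one vertex, the neighborhood of `A` contains `A`, its successors and the
successors of these. -/
lemma grow_grow_subset {N : ℕ} {A : Finset ℕ} (hA : A ⊆ Icc 1 N) :
    cycGrow N (cycGrow N A) ⊆ (cycStep N A).image (cycNext N) := by
  have hself : ∀ a ∈ A, a ∈ cycStep N A := fun a ha =>
    mem_filter.2 ⟨hA ha, a, ha, Or.inl rfl⟩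
  have hnext : ∀ a ∈ A, cycNext N a ∈ cycStep N A := by
    intro a ha
    refine mem_filter.2 ⟨cycNext_mem (hA ha), a, ha, ?_⟩
    unfold cycNext
    split_ifs <;> omega
  have hprev : ∀ a ∈ A, a ∈ (cycStep N A).image (cycNext N) := by
    intro a ha
    have haN := mem_Icc.1 (hA ha)
    by_cases h : a = 1
    · refine mem_image.2 ⟨N, mem_filter.2 ⟨mem_Icc.2 (by omega), a, ha, by omega⟩, ?_⟩
      simp [cycNext, h]
    · refine mem_image.2 ⟨a - 1, mem_filter.2 ⟨mem_Icc.2 (by omega), a, ha, by omega⟩, ?_⟩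
      rw [cycNext, if_neg (by omega)]
      omega
  intro x hx
  simp only [cycGrow, mem_union, mem_image] at hx
  rcases hx with (hx | ⟨a, ha, rfl⟩) | ⟨b, hb | ⟨a, ha, rfl⟩, rfl⟩
  · exact hprev x hx
  · exact mem_image_of_mem _ (hself a ha)
  · exact mem_image_of_mem _ (hself b hb)
  · exact mem_image_of_mem _ (hnext a ha)

lemma card_cycStep {N : ℕ} {A : Finset ℕ} (hA : A ⊆ Icc 1 N) (hne : A.Nonempty) :
    min N (#A + 2) ≤ #(cycStep N A) := by
  have h1 := card_cycGrow hA hne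
  have h2 := card_cycGrow (cycGrow_subset hA) (hne.mono subset_union_left)
  have h3 := card_le_card (grow_grow_subset hA)
  have h4 : #((cycStep N A).image (cycNext N)) ≤ #(cycStep N A) := card_image_le
  omega

lemma GammaC_subset {N : ℕ} (k : ℕ) {A : Finset ℕ} (hA : A ⊆ Icc 1 N) :
    GammaC N k A ⊆ Icc 1 N := by
  cases k with
  | zero => exact hA
  | succ k =>
    rw [GammaC, Function.iterate_succ_apply']
    exact cycStep_subset _ _

lemma card_GammaC {N : ℕ} (k : ℕ) {A : Finset ℕ} (hA : A ⊆ Icc 1 N) (hne : A.Nonempty) :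
    min N (#A + 2 * k) ≤ #(GammaC N k A) := by
  induction k with
  | zero => exact min_le_right _ _
  | succ k ih =>
    have hpos : 0 < #(GammaC N k A) := by
      have := card_le_card hA
      have := hne.card_pos
      simp only [Nat.card_Icc] at *
      omega
    have h := card_cycStep (GammaC_subset k hA) (card_pos.1 hpos)
    have e : GammaC N (k + 1) A = cycStep N (GammaC N k A) :=
      Function.iterate_succ_apply' _ _ _
    rw [e]
    omega

/-- The first `i` answers determine the `i`-th candidate set. -/
lemma Dadapt_congr (Γ : Finset ℕ → Finset ℕ) (σ : List Bool → Finset ℕ) (D0 : Finset ℕ)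
    {y z : ℕ → Bool} (i : ℕ) (h : ∀ j < i, y j = z j) :
    Dadapt Γ σ D0 y i = Dadapt Γ σ D0 z i := by
  induction i with
  | zero => rfl
  | succ i ih =>
    have hl : (List.range i).map y = (List.range i).map z :=
      List.map_congr_left fun j hj => h j (by have := List.mem_range.1 hj; omega)
    simp only [Dadapt, ih fun j hj => h j (by omega), hl, h i (by omega)]

lemma Dadapt_subset (N k : ℕ) (σ : List Bool → Finset ℕ) (y : ℕ → Bool) (i : ℕ) :
    Dadapt (GammaC N k) σ (Icc 1 N) y i ⊆ Icc 1 N := by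
  induction i with
  | zero => exact Subset.rfl
  | succ i ih =>
    simp only [Dadapt]
    split_ifs
    · exact GammaC_subset k (inter_subset_right.trans ih)
    · exact GammaC_subset k (sdiff_subset.trans ih)

/-- The adversary's answers: keeping the larger part preserves the bound
`min N (4k + 1)` on the number of candidates. -/
lemma exists_answers {N k : ℕ} (hN : 1 ≤ N) (σ : List Bool → Finset ℕ) (n : ℕ) :
    ∃ y : ℕ → Bool, ∀ i ≤ n,
      min N (4 * k + 1) ≤ #(Dadapt (GammaC N k) σ (Icc 1 N) y i) := by
  induction n with
  | zero =>
    refine ⟨fun _ => true, fun i hi => ?_⟩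
    obtain rfl : i = 0 := by omega
    simp [Dadapt]
  | succ n ih =>
    obtain ⟨y, hy⟩ := ih
    set D := Dadapt (GammaC N k) σ (Icc 1 N) y n with hD
    set T := σ ((List.range n).map y) with hT
    have hDsub : D ⊆ Icc 1 N := Dadapt_subset N k σ y n
    have hDcard : min N (4 * k + 1) ≤ #D := hy n le_rfl
    have key : ∀ A ⊆ D, #D ≤ 2 * #A → min N (4 * k + 1) ≤ #(GammaC N k A) := by
      intro A hAD hcard
      have := card_GammaC k (hAD.trans hDsub) (card_pos.1 (by omega))
      omega
    have hsplit : #(D \ T) + #(T ∩ D) = #D := by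
      rw [inter_comm]; exact card_sdiff_add_card_inter D T
    obtain ⟨b, hb⟩ : ∃ b : Bool, min N (4 * k + 1) ≤
        #(if b then GammaC N k (T ∩ D) else GammaC N k (D \ T)) := by
      by_cases h : #D ≤ 2 * #(T ∩ D)
      · exact ⟨true, by simpa using key _ inter_subset_right h⟩
      · exact ⟨false, by simpa using key _ sdiff_subset (by omega)⟩
    have hagree : ∀ j < n, Function.update y n b j = y j := fun j hj =>
      Function.update_of_ne (by omega) _ _
    refine ⟨Function.update y n b, fun i hi => ?_⟩
    rcases Nat.lt_or_ge n i with h | h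
    · obtain rfl : i = n + 1 := by omega
      have hl : (List.range n).map (Function.update y n b) = (List.range n).map y :=
        List.map_congr_left fun j hj => hagree j (List.mem_range.1 hj)
      simp only [Dadapt, Dadapt_congr _ σ _ n hagree, hl, Function.update_self]
      exact hb
    · rw [Dadapt_congr _ σ _ i fun j hj => hagree j (by omega)]
      exact hy i h

lemma not_cycSuccessful {N k s : ℕ} (hN : 1 ≤ N) (hs : s < min N (4 * k + 1)) (n : ℕ) :
    ¬ cycSuccessful N k n s := by
  rintro ⟨σ, hσ⟩
  obtain ⟨y, hy⟩ := exists_answers (k := k) hN σ n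
  obtain ⟨i, hi, hle⟩ := hσ y fun i hi => card_pos.1 (by have := hy i hi; omega)
  have := hy i hi
  omega

lemma cycSuccessful_self (N k : ℕ) : cycSuccessful N k 0 N :=
  ⟨fun _ => ∅, fun _ _ => ⟨0, le_rfl, by simp [Dadapt]⟩⟩

lemma le_sStarC {N k : ℕ} (hN : 1 ≤ N) : min N (4 * k + 1) ≤ sStarC N k := by
  -- Nonemptiness of the set of accuracies rules out the junk value `sInf ∅ = 0`.
  have hne : {s | ∃ n, cycSuccessful N k n s}.Nonempty := ⟨N, 0, cycSuccessful_self N k⟩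
  obtain ⟨n, hn⟩ := Nat.sInf_mem hne
  by_contra! h
  exact not_cycSuccessful hN h n hn

/-- Proposition 1: (i) for `1 ≤ N ≤ 4k` no `(C_N,s)`-successful strategy with `s < N`
exists, i.e. `s^*(C_N) = N`; (ii) for `N ≥ 4k+1` no `(C_N,s)`-successful strategy with
`s ≤ 4k` exists, i.e. `s^*(C_N) ≥ 4k+1`. -/
theorem cycle_sStar_bounds (k : ℕ) (hk : 1 ≤ k) :
    (∀ N, 1 ≤ N → N ≤ 4 * k →
      (∀ s < N, ∀ n, ¬ cycSuccessful N k n s) ∧ sStarC N k = N) ∧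
    (∀ N, 4 * k + 1 ≤ N →
      (∀ s ≤ 4 * k, ∀ n, ¬ cycSuccessful N k n s) ∧ 4 * k + 1 ≤ sStarC N k) := by
  refine ⟨fun N hN hNk => ⟨fun s hs n => not_cycSuccessful hN (by omega) n, ?_⟩,
    fun N hN => ⟨fun s hs n => not_cycSuccessful (by omega) (by omega) n, ?_⟩⟩
  · have hle : sStarC N k ≤ N := Nat.sInf_le ⟨0, cycSuccessful_self N k⟩
    have hge := le_sStarC (k := k) hN
    omega
  · have hge := le_sStarC (N := N) (k := k) (by omega)
    omega
end

section
/- Let $k \ge 1$ and $N \ge 4k+1$. For the path $P_N$ on $N$ vertices there is no $(P_N,s)$-successful adaptive strategy with accuracy $s \le 3k$; that is, $s^*(P_N) \ge 3k+1$. -/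
/-!
The adversary keeps `3k+1` consecutive vertices inside the candidate set; call such a set *roomy*.
Initially this holds because `N ≥ 4k+1`, and a roomy set has more than `3k` elements, so it suffices
that a roomy set stays roomy for one of the two answers (`roomy_split`).

Let the run `[p, p+3k]` be covered by the two parts `A` and `B`. If one part contains `2k+1`
consecutive vertices, its `k`-neighborhood is roomy, since the path boundary cuts off the growth
on at most one side (`roomy_of_long_run`). Otherwise each part meets every window of `2k+1` vertices
of the run, so the neighborhood of a part with extreme points `u ≤ v` is the whole interval
`[u-k, v+k]`, cut to the path (`mem_GammaP_of_windows`). Comparing the intervals obtained from the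
two parts shows that one of them is long enough: with `p ∈ A`, the only case where neither interval
is automatically long is the one in which the run is within `k` of both ends of the path, and then
the part containing the vertex `2k+1` expands far enough.
-/

open Finset

/-- `D` contains `3k+1` consecutive vertices of the path on `1, …, N`. -/
def Roomy (N k : ℕ) (D : Finset ℕ) : Prop :=
  ∃ p, 1 ≤ p ∧ p + 3 * k ≤ N ∧ ∀ x, p ≤ x → x ≤ p + 3 * k → x ∈ D

lemma Roomy.lt_card {N k : ℕ} {D : Finset ℕ} (h : Roomy N k D) : 3 * k < D.card := by
  obtain ⟨p, -, -, hD⟩ := h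
  have hsub : Finset.Icc p (p + 3 * k) ⊆ D := by
    intro x hx
    rw [Finset.mem_Icc] at hx
    exact hD x hx.1 hx.2
  have := Finset.card_le_card hsub
  rw [Nat.card_Icc] at this
  omega

lemma mem_GammaP {N : ℕ} (k : ℕ) {A : Finset ℕ} {i j : ℕ} (hi : i ∈ A) (hi1 : 1 ≤ i)
    (hiN : i ≤ N) (hj1 : 1 ≤ j) (hjN : j ≤ N) (hij : i ≤ j + k) (hji : j ≤ i + k) :
    j ∈ GammaP N k A := by
  induction k generalizing j with
  | zero =>
    obtain rfl : i = j := by omega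
    exact hi
  | succ k ih =>
    -- the predecessor of `j` on a shortest walk from `i`
    obtain ⟨m, hm, hm1, hmN, h1, h2⟩ : ∃ m, (j = m ∨ m + 1 = j ∨ j + 1 = m) ∧ 1 ≤ m ∧ m ≤ N ∧
        i ≤ m + k ∧ m ≤ i + k := by
      rcases lt_trichotomy i j with h | h | h
      · exact ⟨j - 1, by omega⟩
      · exact ⟨j, by omega⟩
      · exact ⟨j + 1, by omega⟩
    have hmem : m ∈ (pathStep N)^[k] A := ih hm1 hmN h1 h2
    rw [GammaP, Function.iterate_succ_apply', pathStep, Finset.mem_filter, Finset.mem_Icc]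
    exact ⟨⟨hj1, hjN⟩, m, hmem, hm⟩

/-- A set with no gap of `2k+1` vertices between `u` and `v` expands to an interval. -/
lemma mem_GammaP_of_windows {N k : ℕ} {A : Finset ℕ} {u v : ℕ} (hu : u ∈ A) (hv : v ∈ A)
    (hu1 : 1 ≤ u) (huv : u ≤ v) (hvN : v ≤ N)
    (hw : ∀ x, u ≤ x → x + 2 * k ≤ v → ∃ i ∈ A, x ≤ i ∧ i ≤ x + 2 * k)
    {j : ℕ} (hj1 : 1 ≤ j) (hjN : j ≤ N) (huj : u ≤ j + k) (hjv : j ≤ v + k) :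
    j ∈ GammaP N k A := by
  by_cases h1 : j ≤ u + k
  · exact mem_GammaP k hu hu1 (by omega) hj1 hjN huj h1
  by_cases h2 : v ≤ j + k
  · exact mem_GammaP k hv (by omega) hvN hj1 hjN h2 hjv
  obtain ⟨i, hi, hxi, hix⟩ := hw (j - k) (by omega) (by omega)
  exact mem_GammaP k hi (by omega) (by omega) hj1 hjN (by omega) (by omega)

lemma roomy_of_long_run {N k : ℕ} (hN : 4 * k + 1 ≤ N) {A : Finset ℕ} {x : ℕ} (hx1 : 1 ≤ x)
    (hxN : x + 2 * k ≤ N) (hA : ∀ i, x ≤ i → i ≤ x + 2 * k → i ∈ A) :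
    Roomy N k (GammaP N k A) := by
  have key : ∀ j, 1 ≤ j → j ≤ N → x ≤ j + k → j ≤ x + 3 * k → j ∈ GammaP N k A := by
    intro j h1 h2 h3 h4
    exact mem_GammaP_of_windows (hA x le_rfl (by omega)) (hA (x + 2 * k) (by omega) le_rfl) hx1
      (by omega) hxN (fun y h5 h6 => ⟨y, hA y h5 (by omega), by omega, by omega⟩)
      h1 h2 h3 (by omega)
  by_cases h : x + 3 * k ≤ N
  · exact ⟨x, hx1, h, fun j h1 h2 => key j (by omega) (by omega) (by omega) h2⟩
  · exact ⟨x - k, by omega, by omega,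
      fun j h1 h2 => key j (by omega) (by omega) (by omega) (by omega)⟩

/-- The splitting step when the first vertex of the run lies in `A`; the general case follows by
exchanging the two parts. -/
lemma roomy_split_aux {N k : ℕ} (hN : 4 * k + 1 ≤ N) {A B : Finset ℕ} {p : ℕ} (hp1 : 1 ≤ p)
    (hpN : p + 3 * k ≤ N) (hAB : ∀ x, p ≤ x → x ≤ p + 3 * k → x ∈ A ∨ x ∈ B) (hpA : p ∈ A) :
    Roomy N k (GammaP N k A) ∨ Roomy N k (GammaP N k B) := by
  by_contra! hcon
  obtain ⟨hnA, hnB⟩ := hcon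
  have wA : ∀ x, p ≤ x → x + 2 * k ≤ p + 3 * k → ∃ i ∈ A, x ≤ i ∧ i ≤ x + 2 * k := by
    intro x h1 h2
    by_contra! h
    refine hnB (roomy_of_long_run hN (x := x) (by omega) (by omega) fun i h3 h4 => ?_)
    exact (hAB i (by omega) (by omega)).resolve_left fun hi => by have := h i hi h3; omega
  have wB : ∀ x, p ≤ x → x + 2 * k ≤ p + 3 * k → ∃ i ∈ B, x ≤ i ∧ i ≤ x + 2 * k := by
    intro x h1 h2
    by_contra! h
    refine hnA (roomy_of_long_run hN (x := x) (by omega) (by omega) fun i h3 h4 => ?_)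
    exact (hAB i (by omega) (by omega)).resolve_right fun hi => by have := h i hi h3; omega
  have hullA : ∀ v ∈ A, p ≤ v → v ≤ p + 3 * k → ∀ j, 1 ≤ j → j ≤ N → p ≤ j + k → j ≤ v + k →
      j ∈ GammaP N k A := fun v hv h1 h2 j h3 h4 h5 h6 =>
    mem_GammaP_of_windows hpA hv hp1 h1 (by omega)
      (fun x h7 h8 => wA x h7 (by omega)) h3 h4 h5 h6
  have hend : p + 3 * k ∈ B := by
    refine (hAB _ (by omega) le_rfl).resolve_left fun h => hnA ⟨p, hp1, hpN, fun j h1 h2 => ?_⟩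
    exact hullA _ h (by omega) le_rfl j (by omega) (by omega) (by omega) (by omega)
  have hullB : ∀ u ∈ B, p ≤ u → u ≤ p + 3 * k → ∀ j, 1 ≤ j → j ≤ N → u ≤ j + k →
      j ≤ p + 3 * k + k → j ∈ GammaP N k B := fun u hu h1 h2 j h3 h4 h5 h6 =>
    mem_GammaP_of_windows hu hend (by omega) h2 hpN
      (fun x h7 h8 => wB x (by omega) h8) h3 h4 h5 h6
  -- the expansion of `A` does not reach `p+3k`, and that of `B` does not reach `p`
  have hmidB : p + 2 * k ∈ B := by
    refine (hAB _ (by omega) (by omega)).resolve_left fun h =>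
      hnA ⟨p, hp1, hpN, fun j h1 h2 => ?_⟩
    exact hullA _ h (by omega) (by omega) j (by omega) (by omega) (by omega) (by omega)
  have hmidA : p + k ∈ A := by
    refine (hAB _ (by omega) (by omega)).resolve_right fun h =>
      hnB ⟨p, hp1, hpN, fun j h1 h2 => ?_⟩
    exact hullB _ h (by omega) (by omega) j (by omega) (by omega) (by omega) (by omega)
  by_cases hleft : k + 1 ≤ p
  · refine hnA ⟨p - k, by omega, by omega, fun j h1 h2 => ?_⟩
    exact hullA _ hmidA (by omega) (by omega) j (by omega) (by omega) (by omega) (by omega)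
  by_cases hright : p + 4 * k ≤ N
  · refine hnB ⟨p + k, by omega, by omega, fun j h1 h2 => ?_⟩
    exact hullB _ hmidB (by omega) (by omega) j (by omega) (by omega) (by omega) (by omega)
  -- both expansions are stopped by an end of the path
  rcases hAB (2 * k + 1) (by omega) (by omega) with h | h
  · refine hnA ⟨1, by omega, by omega, fun j h1 h2 => ?_⟩
    exact hullA _ h (by omega) (by omega) j (by omega) (by omega) (by omega) (by omega)
  · refine hnB ⟨k + 1, by omega, by omega, fun j h1 h2 => ?_⟩
    exact hullB _ h (by omega) (by omega) j (by omega) (by omega) (by omega) (by omega)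

lemma roomy_split {N k : ℕ} (hN : 4 * k + 1 ≤ N) {D : Finset ℕ} (hD : Roomy N k D)
    (T : Finset ℕ) : Roomy N k (GammaP N k (T ∩ D)) ∨ Roomy N k (GammaP N k (D \ T)) := by
  obtain ⟨p, hp1, hpN, hrun⟩ := hD
  have hcover : ∀ x, p ≤ x → x ≤ p + 3 * k → x ∈ T ∩ D ∨ x ∈ D \ T := by
    intro x h1 h2
    have := hrun x h1 h2
    rw [Finset.mem_inter, Finset.mem_sdiff]
    tauto
  rcases hcover p le_rfl (by omega) with h | h
  · exact roomy_split_aux hN hp1 hpN hcover h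
  · exact (roomy_split_aux hN hp1 hpN (fun x h1 h2 => (hcover x h1 h2).symm) h).symm

/-- Against every strategy the adversary can answer so that all candidate sets stay roomy. -/
lemma exists_roomy_answers {N k : ℕ} (hN : 4 * k + 1 ≤ N) (σ : List Bool → Finset ℕ) (n : ℕ) :
    ∃ y : ℕ → Bool, ∀ i ≤ n, Roomy N k (Dadapt (GammaP N k) σ (Finset.Icc 1 N) y i) := by
  induction n with
  | zero =>
    refine ⟨fun _ => true, fun i hi => ?_⟩
    obtain rfl : i = 0 := by omega
    exact ⟨1, le_rfl, by omega, fun x h1 h2 => Finset.mem_Icc.2 ⟨h1, by omega⟩⟩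
  | succ n ih =>
    obtain ⟨y, hy⟩ := ih
    have hold : ∀ b, ∀ i ≤ n, Dadapt (GammaP N k) σ (Finset.Icc 1 N) (Function.update y n b) i =
        Dadapt (GammaP N k) σ (Finset.Icc 1 N) y i := fun b i hi =>
      Dadapt_congr _ _ _ i fun j hj => Function.update_of_ne (by omega) _ _
    have hmap : ∀ b, (List.range n).map (Function.update y n b) = (List.range n).map y :=
      fun b => List.map_congr_left fun j hj =>
        Function.update_of_ne (by rw [List.mem_range] at hj; omega) _ _
    -- changing the answer to test `n+1` does not affect the earlier candidate sets
    have hext : ∀ b, Roomy N k (Dadapt (GammaP N k) σ (Finset.Icc 1 N)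
        (Function.update y n b) (n + 1)) →
        ∃ z : ℕ → Bool, ∀ i ≤ n + 1,
          Roomy N k (Dadapt (GammaP N k) σ (Finset.Icc 1 N) z i) := by
      intro b hb
      refine ⟨Function.update y n b, fun i hi => ?_⟩
      rcases Nat.le_succ_iff.1 hi with h | rfl
      · rw [hold b i h]
        exact hy i h
      · exact hb
    rcases roomy_split hN (hy n le_rfl) (σ ((List.range n).map y)) with h | h
    · refine hext true ?_
      simpa [Dadapt, hold true n le_rfl, hmap true] using h
    · refine hext false ?_
      simpa [Dadapt, hold false n le_rfl, hmap false] using h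

/-- Proposition 2: for `k ≥ 1` and `N ≥ 4k+1` there is no `(P_N,s)`-successful
strategy with `s ≤ 3k`, i.e. `s^*(P_N) ≥ 3k+1`. -/
theorem path_sStar_lower (k N : ℕ) (hk : 1 ≤ k) (hN : 4 * k + 1 ≤ N) :
    (∀ s ≤ 3 * k, ∀ n, ¬ pathSuccessful N k n s) ∧ 3 * k + 1 ≤ sStarP N k := by
  have hfail : ∀ s ≤ 3 * k, ∀ n, ¬ pathSuccessful N k n s := by
    rintro s hs n ⟨σ, hσ⟩
    obtain ⟨y, hy⟩ := exists_roomy_answers hN σ n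
    obtain ⟨i, hi, hcard⟩ := hσ y fun i hi => Finset.card_pos.1 (by
      have := (hy i hi).lt_card
      omega)
    have := (hy i hi).lt_card
    omega
  refine ⟨hfail, le_csInf ?_ ?_⟩
  · -- accuracy `N` is reached without any test, so the infimum is over a nonempty set
    exact ⟨N, 0, fun _ => ∅, fun y _ => ⟨0, le_rfl, by simp [Dadapt]⟩⟩
  · rintro s ⟨n, hn⟩
    by_contra hlt
    exact hfail s (by omega) n hn
end

section
/- For $k \ge 1$, the minimum accuracy $s$ for which a $(P_N,s)$-successful adaptive strategy exists is: $s^*(P_N) = N$ if $N \le 2k+1$; $s^*(P_N) = \lceil N/2 \rceil + k$ if $2k+1 < N < 4k+1$; and $s^*(P_N) = 3k+1$ if $N \ge 4k+1$. -/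
/-!
Write `Γ` for `GammaP N k`; on subsets of `{1, …, N}` it collects the vertices at distance at most
`k` (`mem_GammaP`).

*Upper bounds.* No test is needed for `s = N`. One test of the left half `{1, …, ⌈N/2⌉}` gives
`s = ⌈N/2⌉ + k`. For `s = 3k + 1`, test the initial segments `{1, …, 2k + 1 + i}` for
`i = 0, 1, …`: a positive answer leaves at most `3k + 1` candidates, and as long as all answers are
negative the candidates after `i ≥ 1` tests are at least `k + 1 + i`, so they run out.

*Lower bounds.* An adversary keeps an invariant `P` of the candidate set that forces it to be large
(`not_successful_of_invariant`). If `N ≤ 2k + 1`, the central vertex reaches everything, so the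
adversary keeps all of `{1, …, N}`. Otherwise put `t = min ⌈N/2⌉ (2k + 1)`; the invariant is that
`D` has at least `t + k` elements and meets the central interval `[t, N + 1 - t]`. When `D` is
split into two parts, let `B` be a part containing a central vertex of `D` and `A` the other.

* If `|B| ≥ t - k`, then `|Γ(B)| ≥ t + k` (`card_Gamma_central`) and the invariant holds for `Γ(B)`.
* Otherwise `|A| ≥ 2k + 1 ≥ t`, hence `|Γ(A)| ≥ t + k` (`card_Gamma_large`). Moreover `Γ(A)` meets
  the central interval, because at most `2(t - k - 1) ≤ 2k` vertices are at distance more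
  than `k` from it.

Both cardinality bounds come from `Gamma_gap_or_interval`: either `Γ(B)` gains `2k` vertices inside
a gap of `B`, or it contains every vertex between `min B - k` and `max B + k`.
-/

open Finset

/-! ### Neighborhoods on the path -/

theorem mem_GammaP_s3 (N k : ℕ) (A : Finset ℕ) (hA : A ⊆ Finset.Icc 1 N) (j : ℕ) :
    j ∈ GammaP N k A ↔ (1 ≤ j ∧ j ≤ N) ∧ ∃ i ∈ A, i ≤ j + k ∧ j ≤ i + k := by
  induction k generalizing j with
  | zero =>
    constructor
    · intro h
      exact ⟨Finset.mem_Icc.1 (hA h), j, h, by omega, by omega⟩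
    · rintro ⟨-, i, hi, h1, h2⟩
      obtain rfl : i = j := by omega
      exact hi
  | succ k ih =>
    have e : GammaP N (k + 1) A = pathStep N (GammaP N k A) :=
      Function.iterate_succ_apply' _ _ _
    rw [e, pathStep, Finset.mem_filter, Finset.mem_Icc]
    constructor
    · rintro ⟨hj, m, hm, h⟩
      obtain ⟨-, i, hi, h1, h2⟩ := (ih m).1 hm
      exact ⟨hj, i, hi, by omega, by omega⟩
    · rintro ⟨hj, i, hi, h1, h2⟩
      refine ⟨hj, ?_⟩
      have hi' := Finset.mem_Icc.1 (hA hi)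
      -- Take the last step of the walk from `i` to `j` towards `j`, or stay put.
      rcases lt_trichotomy i j with h | h | h
      · exact ⟨j - 1, (ih _).2 ⟨by omega, i, hi, by omega, by omega⟩, by omega⟩
      · exact ⟨j, (ih _).2 ⟨by omega, i, hi, by omega, by omega⟩, by omega⟩
      · exact ⟨j + 1, (ih _).2 ⟨by omega, i, hi, by omega, by omega⟩, by omega⟩

theorem GammaP_subset (N k : ℕ) (A : Finset ℕ) (hA : A ⊆ Finset.Icc 1 N) :
    GammaP N k A ⊆ Finset.Icc 1 N := fun j hj =>
  Finset.mem_Icc.2 ((mem_GammaP_s3 N k A hA j).1 hj).1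

/-! ### Adversary arguments -/

/-- The answers given so far and the current candidate set, when an adversary playing against `σ`
answers `true` exactly when this preserves `P`. -/
noncomputable def advState (Γ : Finset ℕ → Finset ℕ) (σ : List Bool → Finset ℕ) (D0 : Finset ℕ)
    (P : Finset ℕ → Prop) : ℕ → List Bool × Finset ℕ
  | 0 => ([], D0)
  | i + 1 =>
      let S := advState Γ σ D0 P i
      open Classical in
      if P (Γ (σ S.1 ∩ S.2)) then (S.1 ++ [true], Γ (σ S.1 ∩ S.2))
      else (S.1 ++ [false], Γ (S.2 \ σ S.1))

/-- If the adversary can preserve `P` under every test, and `P` forces more than `s` candidates,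
then no strategy reaches accuracy `s`. -/
theorem not_successful_of_invariant (Γ : Finset ℕ → Finset ℕ) (D0 : Finset ℕ) (n s : ℕ)
    (P : Finset ℕ → Prop) (h0 : P D0)
    (hstep : ∀ D T, P D → P (Γ (T ∩ D)) ∨ P (Γ (D \ T)))
    (hcard : ∀ D, P D → s < D.card) : ¬ Successful Γ D0 n s := by
  classical
  rintro ⟨σ, hσ⟩
  set S := advState Γ σ D0 P with hS
  have hsucc : ∀ i, S (i + 1) = if P (Γ (σ (S i).1 ∩ (S i).2)) then
      ((S i).1 ++ [true], Γ (σ (S i).1 ∩ (S i).2))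
      else ((S i).1 ++ [false], Γ ((S i).2 \ σ (S i).1)) := by
    intro i
    simp only [hS, advState]
  let y : ℕ → Bool := fun i => decide (P (Γ (σ (S i).1 ∩ (S i).2)))
  have key : ∀ i, (List.range i).map y = (S i).1 ∧ Dadapt Γ σ D0 y i = (S i).2 ∧ P (S i).2 := by
    intro i
    induction i with
    | zero => exact ⟨rfl, rfl, h0⟩
    | succ i ih =>
      obtain ⟨h1, h2, h3⟩ := ih
      rw [List.range_succ, List.map_append, h1, hsucc]
      simp only [Dadapt, h1, h2]
      by_cases hp : P (Γ (σ (S i).1 ∩ (S i).2))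
      · have hy : y i = true := decide_eq_true hp
        simp [hy, hp]
      · have hy : y i = false := decide_eq_false hp
        simpa [hy, hp] using (hstep _ (σ (S i).1) h3).resolve_left hp
  have hbig : ∀ i, s < (Dadapt Γ σ D0 y i).card := fun i => by
    rw [(key i).2.1]
    exact hcard _ (key i).2.2
  obtain ⟨i, -, hi⟩ := hσ y fun i _ => Finset.card_pos.1 ((Nat.zero_le s).trans_lt (hbig i))
  exact absurd hi (hbig i).not_ge

/-! ### Expansion of vertex sets -/

/-- Either `B` has a gap of length at least `2k`, in which `Γ(B)` gains `2k` new vertices, or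
`Γ(B)` is the whole interval `[min B - k, max B + k] ∩ [1, N]`. -/
theorem Gamma_gap_or_interval (N k : ℕ) (B : Finset ℕ) (hB : B ⊆ Finset.Icc 1 N)
    (hne : B.Nonempty) :
    B.card + 2 * k ≤ (GammaP N k B).card ∨
    ∃ a ∈ B, ∃ b ∈ B, (∀ x ∈ B, a ≤ x ∧ x ≤ b) ∧
      Finset.Icc (max 1 (a - k)) (min N (b + k)) ⊆ GammaP N k B := by
  by_cases hsub : Finset.Icc (max 1 (B.min' hne - k)) (min N (B.max' hne + k)) ⊆ GammaP N k B
  · exact Or.inr ⟨_, B.min'_mem hne, _, B.max'_mem hne,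
      fun x hx => ⟨B.min'_le x hx, B.le_max' x hx⟩, hsub⟩
  left
  obtain ⟨z, hz, hzn⟩ := Finset.not_subset.1 hsub
  rw [Finset.mem_Icc] at hz
  -- Every vertex of `B` is at distance more than `k` from `z`.
  have hfar : ∀ i ∈ B, i + k < z ∨ z + k < i := by
    intro i hi
    by_contra hcon
    exact hzn ((mem_GammaP_s3 N k B hB z).2 ⟨by omega, i, hi, by omega, by omega⟩)
  have hLne : (B.filter (· < z)).Nonempty :=
    ⟨_, Finset.mem_filter.2 ⟨B.min'_mem hne, by
      have := hfar _ (B.min'_mem hne); omega⟩⟩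
  have hUne : (B.filter (z < ·)).Nonempty :=
    ⟨_, Finset.mem_filter.2 ⟨B.max'_mem hne, by
      have := hfar _ (B.max'_mem hne); omega⟩⟩
  -- `x` and `y` are the neighbours of `z` in `B`.
  obtain ⟨x, hx, hxmax⟩ := Finset.exists_max_image _ id hLne
  obtain ⟨y, hy, hymin⟩ := Finset.exists_min_image _ id hUne
  simp only [Finset.mem_filter, id] at hx hy hxmax hymin
  have hx1 := hfar x hx.1
  have hy1 := hfar y hy.1
  have hxN := Finset.mem_Icc.1 (hB hx.1)
  have hyN := Finset.mem_Icc.1 (hB hy.1)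
  have hgap : ∀ i ∈ B, i ≤ x ∨ y ≤ i := by
    intro i hi
    rcases hfar i hi with h | h
    · exact Or.inl (hxmax i ⟨hi, by omega⟩)
    · exact Or.inr (hymin i ⟨hi, by omega⟩)
  have hd1 : Disjoint (Finset.Ioc x (x + k)) (Finset.Ico (y - k) y) := by
    rw [Finset.disjoint_left]
    intro i h1 h2
    rw [Finset.mem_Ioc] at h1
    rw [Finset.mem_Ico] at h2
    omega
  have hd2 : Disjoint B (Finset.Ioc x (x + k) ∪ Finset.Ico (y - k) y) := by
    rw [Finset.disjoint_left]
    intro i h1 h2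
    rw [Finset.mem_union, Finset.mem_Ioc, Finset.mem_Ico] at h2
    have := hgap i h1
    omega
  have hc : (B ∪ (Finset.Ioc x (x + k) ∪ Finset.Ico (y - k) y)).card = B.card + 2 * k := by
    rw [Finset.card_union_of_disjoint hd2, Finset.card_union_of_disjoint hd1, Nat.card_Ioc,
      Nat.card_Ico]
    omega
  rw [← hc]
  refine Finset.card_le_card fun i hi => (mem_GammaP_s3 N k B hB i).2 ?_
  rw [Finset.mem_union, Finset.mem_union, Finset.mem_Ioc, Finset.mem_Ico] at hi
  rcases hi with h | h | h
  · exact ⟨Finset.mem_Icc.1 (hB h), i, h, by omega, by omega⟩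
  · exact ⟨by omega, x, hx.1, by omega, by omega⟩
  · exact ⟨by omega, y, hy.1, by omega, by omega⟩

theorem card_Gamma_central (N k t v : ℕ) (ht1 : k + 1 ≤ t) (ht3 : 2 * t ≤ N + 1)
    (B : Finset ℕ) (hB : B ⊆ Finset.Icc 1 N) (hv : v ∈ B) (hv1 : t ≤ v) (hv2 : v + t ≤ N + 1)
    (hc : t ≤ B.card + k) : t + k ≤ (GammaP N k B).card := by
  rcases Gamma_gap_or_interval N k B hB ⟨v, hv⟩ with h | ⟨a, ha, b, hb, hab, hsub⟩
  · omega
  · have h1 := Finset.card_le_card hsub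
    have h2 : B.card ≤ (Finset.Icc a b).card :=
      Finset.card_le_card fun x hx => Finset.mem_Icc.2 (hab x hx)
    rw [Nat.card_Icc] at h1 h2
    have h3 := hab v hv
    omega

theorem card_Gamma_large (N k t : ℕ) (ht1 : k + 1 ≤ t) (ht3 : 2 * t ≤ N + 1)
    (A : Finset ℕ) (hA : A ⊆ Finset.Icc 1 N)
    (hc : t ≤ A.card) : t + k ≤ (GammaP N k A).card := by
  have hne : A.Nonempty := Finset.card_pos.1 (by omega)
  rcases Gamma_gap_or_interval N k A hA hne with h | ⟨a, ha, b, hb, hab, hsub⟩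
  · omega
  · have h1 := Finset.card_le_card hsub
    have h2 : A.card ≤ (Finset.Icc a b).card :=
      Finset.card_le_card fun x hx => Finset.mem_Icc.2 (hab x hx)
    rw [Nat.card_Icc] at h1 h2
    have h3 := Finset.mem_Icc.1 (hA ha)
    have h4 := Finset.mem_Icc.1 (hA hb)
    omega

/-! ### Lower bounds -/

/-- The adversary's invariant for `N > 2k + 1`: many candidates, at least one of them central. -/
def CentralInv (N k t : ℕ) (D : Finset ℕ) : Prop :=
  D ⊆ Finset.Icc 1 N ∧ t + k ≤ D.card ∧ ∃ v ∈ D, t ≤ v ∧ v + t ≤ N + 1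

/-- If `B` is the part of the candidate set `A ∪ B` containing a central vertex, then one of `A`,
`B` still satisfies the invariant after the target moves. -/
theorem centralInv_split (N k t v : ℕ) (ht1 : k + 1 ≤ t) (ht2 : t ≤ 2 * k + 1) (ht3 : 2 * t ≤ N + 1)
    (A B : Finset ℕ) (hA : A ⊆ Finset.Icc 1 N) (hB : B ⊆ Finset.Icc 1 N)
    (hv : v ∈ B) (hv1 : t ≤ v) (hv2 : v + t ≤ N + 1) (hc : t + k ≤ A.card + B.card) :
    CentralInv N k t (GammaP N k A) ∨ CentralInv N k t (GammaP N k B) := by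
  by_cases hb : t ≤ B.card + k
  · exact Or.inr ⟨GammaP_subset N k B hB,
      card_Gamma_central N k t v ht1 ht3 B hB hv hv1 hv2 hb,
      v, (mem_GammaP_s3 N k B hB v).2 ⟨by omega, v, hv, by omega, by omega⟩, hv1, hv2⟩
  left
  refine ⟨GammaP_subset N k A hA, card_Gamma_large N k t ht1 ht3 A hA (by omega), ?_⟩
  -- `A` has at least `2k + 1` elements, so not all of them are farther than `k` from the centre.
  have hnot : ¬ A ⊆ Finset.Icc 1 (t - k - 1) ∪ Finset.Icc (N + k + 2 - t) N := by
    intro h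
    have h1 := (Finset.card_le_card h).trans (Finset.card_union_le _ _)
    rw [Nat.card_Icc, Nat.card_Icc] at h1
    omega
  obtain ⟨u, hu, hun⟩ := Finset.not_subset.1 hnot
  have huN := Finset.mem_Icc.1 (hA hu)
  rw [Finset.mem_union, Finset.mem_Icc, Finset.mem_Icc] at hun
  -- The point of `[t, N + 1 - t]` nearest to `u`.
  refine ⟨max t (min u (N + 1 - t)), (mem_GammaP_s3 N k A hA _).2 ⟨by omega, u, hu, ?_, ?_⟩, ?_, ?_⟩ <;>
    omega

theorem not_successful_of_lt (N k t n s : ℕ) (ht1 : k + 1 ≤ t) (ht2 : t ≤ 2 * k + 1)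
    (ht3 : 2 * t ≤ N + 1) (hs : s < t + k) : ¬ pathSuccessful N k n s := by
  refine not_successful_of_invariant _ _ _ _ (CentralInv N k t) ?_ ?_ ?_
  · refine ⟨subset_rfl, ?_, t, Finset.mem_Icc.2 ⟨by omega, by omega⟩, by omega, by omega⟩
    rw [Nat.card_Icc]
    omega
  · rintro D T ⟨hD, hc, v, hv, hv1, hv2⟩
    have h1 : T ∩ D ⊆ Finset.Icc 1 N := Finset.inter_subset_right.trans hD
    have h2 : D \ T ⊆ Finset.Icc 1 N := Finset.sdiff_subset.trans hD
    have h3 := Finset.card_sdiff_add_card_inter D T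
    rw [Finset.inter_comm] at h3
    by_cases hvT : v ∈ T
    · exact (centralInv_split N k t v ht1 ht2 ht3 _ _ h2 h1 (Finset.mem_inter.2 ⟨hvT, hv⟩) hv1 hv2
        (by omega)).symm
    · exact centralInv_split N k t v ht1 ht2 ht3 _ _ h1 h2 (Finset.mem_sdiff.2 ⟨hv, hvT⟩) hv1 hv2
        (by omega)
  · rintro D ⟨-, hc, -⟩
    omega

/-- When `N ≤ 2k + 1`, the part of the candidate set containing the middle vertex expands to the
whole path. -/
theorem not_successful_short (N k n s : ℕ) (hN : 1 ≤ N) (h : N ≤ 2 * k + 1) (hs : s < N) :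
    ¬ pathSuccessful N k n s := by
  have hfull : ∀ A ⊆ Finset.Icc 1 N, (N + 1) / 2 ∈ A → GammaP N k A = Finset.Icc 1 N := by
    intro A hA hm
    refine (GammaP_subset N k A hA).antisymm fun j hj => ?_
    rw [Finset.mem_Icc] at hj
    exact (mem_GammaP_s3 N k A hA j).2 ⟨hj, _, hm, by omega, by omega⟩
  refine not_successful_of_invariant _ _ _ _ (· = Finset.Icc 1 N) rfl ?_ ?_
  · rintro D T rfl
    have hm : (N + 1) / 2 ∈ Finset.Icc 1 N := Finset.mem_Icc.2 ⟨by omega, by omega⟩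
    by_cases hT : (N + 1) / 2 ∈ T
    · exact Or.inl (hfull _ Finset.inter_subset_right (Finset.mem_inter.2 ⟨hT, hm⟩))
    · exact Or.inr (hfull _ Finset.sdiff_subset (Finset.mem_sdiff.2 ⟨hm, hT⟩))
  · rintro D rfl
    rw [Nat.card_Icc]
    omega

/-! ### Upper bounds -/

theorem successful_trivial (N k : ℕ) : pathSuccessful N k 0 N :=
  ⟨fun _ => ∅, fun y _ => ⟨0, le_rfl, by simp [Dadapt]⟩⟩

/-- Test the left half of the path. -/
theorem successful_half (N k : ℕ) : pathSuccessful N k 1 ((N + 1) / 2 + k) := by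
  refine ⟨fun _ => Finset.Icc 1 ((N + 1) / 2), fun y _ => ⟨1, le_rfl, ?_⟩⟩
  simp only [Dadapt]
  split
  · have hsub : GammaP N k (Finset.Icc 1 ((N + 1) / 2) ∩ Finset.Icc 1 N) ⊆
        Finset.Icc 1 ((N + 1) / 2 + k) := by
      intro j hj
      rw [mem_GammaP_s3 _ _ _ Finset.inter_subset_right] at hj
      obtain ⟨hj, i, hi, h1, h2⟩ := hj
      simp only [Finset.mem_inter, Finset.mem_Icc] at hi ⊢
      omega
    have := Finset.card_le_card hsub
    rw [Nat.card_Icc] at this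
    omega
  · have hsub : GammaP N k (Finset.Icc 1 N \ Finset.Icc 1 ((N + 1) / 2)) ⊆
        Finset.Icc (max 1 ((N + 1) / 2 + 1 - k)) N := by
      intro j hj
      rw [mem_GammaP_s3 _ _ _ Finset.sdiff_subset] at hj
      obtain ⟨hj, i, hi, h1, h2⟩ := hj
      simp only [Finset.mem_sdiff, Finset.mem_Icc] at hi ⊢
      omega
    have := Finset.card_le_card hsub
    rw [Nat.card_Icc] at this
    omega

/-- Sweep the path from the left: the `i`-th test (counted from `0`) is `{1, …, 2k + 1 + i}`. -/
theorem successful_sweep (N k : ℕ) : pathSuccessful N k (N + 1) (3 * k + 1) := by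
  refine ⟨fun L => Finset.Icc 1 (2 * k + 1 + L.length), fun y _ => ?_⟩
  set D := Dadapt (GammaP N k) (fun L => Finset.Icc 1 (2 * k + 1 + L.length)) (Finset.Icc 1 N) y
    with hDdef
  have key : ∀ i, (∃ m ≤ i, (D m).card ≤ 3 * k + 1) ∨
      (D i ⊆ Finset.Icc 1 N ∧ ∀ x ∈ D i, 1 ≤ i → k + 1 + i ≤ x) := by
    intro i
    induction i with
    | zero => exact Or.inr ⟨subset_rfl, fun x _ h => absurd h (by omega)⟩
    | succ i ih =>
      rcases ih with ⟨m, hm, hc⟩ | ⟨hsub, hlow⟩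
      · exact Or.inl ⟨m, by omega, hc⟩
      have hD : D (i + 1) = if y i then GammaP N k (Finset.Icc 1 (2 * k + 1 + i) ∩ D i)
          else GammaP N k (D i \ Finset.Icc 1 (2 * k + 1 + i)) := by
        simp [hDdef, Dadapt]
      by_cases hy : y i = true
      · left
        refine ⟨i + 1, le_rfl, ?_⟩
        rw [hD, if_pos hy]
        have hs : GammaP N k (Finset.Icc 1 (2 * k + 1 + i) ∩ D i) ⊆
            Finset.Icc (i + 1) (3 * k + 1 + i) := by
          intro j hj
          rw [mem_GammaP_s3 _ _ _ (Finset.inter_subset_right.trans hsub)] at hj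
          obtain ⟨hj, u, hu, h1, h2⟩ := hj
          rw [Finset.mem_inter, Finset.mem_Icc] at hu
          rw [Finset.mem_Icc]
          have := hlow u hu.2
          omega
        have := Finset.card_le_card hs
        rw [Nat.card_Icc] at this
        omega
      · right
        rw [hD, if_neg hy]
        refine ⟨GammaP_subset _ _ _ (Finset.sdiff_subset.trans hsub), fun j hj _ => ?_⟩
        rw [mem_GammaP_s3 _ _ _ (Finset.sdiff_subset.trans hsub)] at hj
        obtain ⟨hj, u, hu, h1, h2⟩ := hj
        rw [Finset.mem_sdiff, Finset.mem_Icc] at hu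
        have := Finset.mem_Icc.1 (hsub hu.1)
        omega
  rcases key (N + 1) with h | ⟨hsub, hlow⟩
  · exact h
  · have he : D (N + 1) = ∅ := by
      refine Finset.eq_empty_of_forall_notMem fun x hx => ?_
      have h1 := hlow x hx (by omega)
      have h2 := Finset.mem_Icc.1 (hsub hx)
      omega
    exact ⟨N + 1, le_rfl, by simp [he]⟩

/-! ### The value of the minimum accuracy -/

theorem sStarP_eq (N k n m : ℕ) (h : pathSuccessful N k n m)
    (h' : ∀ n s, s < m → ¬ pathSuccessful N k n s) : sStarP N k = m := by
  refine le_antisymm (Nat.sInf_le ⟨n, h⟩) (le_csInf ⟨m, n, h⟩ ?_)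
  rintro s ⟨n', hs⟩
  by_contra hlt
  exact h' n' s (by omega) hs

/-- Theorem 2: the minimum accuracy for the path `P_N` is `N` for `N ≤ 2k+1`,
`⌈N/2⌉ + k` for `2k+1 < N < 4k+1`, and `3k+1` for `N ≥ 4k+1`. -/
theorem path_sStar (k N : ℕ) (hk : 1 ≤ k) (hN : 1 ≤ N) :
    (N ≤ 2 * k + 1 → sStarP N k = N) ∧
    (2 * k + 1 < N → N < 4 * k + 1 → sStarP N k = (N + 1) / 2 + k) ∧
    (4 * k + 1 ≤ N → sStarP N k = 3 * k + 1) := by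
  refine ⟨fun h => ?_, fun h1 h2 => ?_, fun h => ?_⟩
  · exact sStarP_eq N k 0 N (successful_trivial N k) fun n s hs =>
      not_successful_short N k n s hN h hs
  · exact sStarP_eq N k 1 _ (successful_half N k) fun n s hs =>
      not_successful_of_lt N k ((N + 1) / 2) n s (by omega) (by omega) (by omega) hs
  · exact sStarP_eq N k (N + 1) _ (successful_sweep N k) fun n s hs =>
      not_successful_of_lt N k (2 * k + 1) n s (by omega) (by omega) (by omega) (by omega)
end

section
/- Let $k \ge 1$, $n \ge 0$ and $s \ge 4k$. Then the maximum $N$ such that there exists a $(P_N,s)$-successful adaptive strategy with $n$ tests satisfies $N_p(n,s) \le (s-4k)2^n + k(2n+4)$. -/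
/-!
A target that starts at distance at least `n * k` from both ends of the path cannot feel the ends
during `n` tests. The candidate sets are monotone in the initial set, so a strategy that succeeds
on `{1, …, N}` also succeeds on `{n * k + 1, …, N - n * k}`. Away from the ends, a nonempty set
grows by at least `2 * k` elements under the `k`-neighborhood (`card_gammaP`), so if `f n` bounds
the size of such an initial set that can be handled with `n` tests, then
`f (n + 1) ≤ 2 * (f n - 2 * k)` with `f 0 = s`. Hence `f n = (s - 4 * k) * 2 ^ n + 4 * k`
(`card_le_of_central`), and adding back the `2 * n * k` discarded vertices gives the bound.
-/


open Finset

theorem pathStep_mono (N : ℕ) {A B : Finset ℕ} (h : A ⊆ B) : pathStep N A ⊆ pathStep N B := by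
  intro x hx
  simp only [pathStep, Finset.mem_filter] at hx ⊢
  obtain ⟨hx, i, hi, h'⟩ := hx
  exact ⟨hx, i, h hi, h'⟩

theorem gammaP_mono (N k : ℕ) {A B : Finset ℕ} (h : A ⊆ B) : GammaP N k A ⊆ GammaP N k B := by
  induction k generalizing A B with
  | zero => exact h
  | succ k ih => exact ih (pathStep_mono N h)

theorem Dadapt_mono (N k : ℕ) (σ : List Bool → Finset ℕ) (y : ℕ → Bool) {A B : Finset ℕ}
    (h : A ⊆ B) (i : ℕ) : Dadapt (GammaP N k) σ A y i ⊆ Dadapt (GammaP N k) σ B y i := by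
  induction i with
  | zero => exact h
  | succ i ih =>
    simp only [Dadapt]
    split_ifs
    · exact gammaP_mono N k (Finset.inter_subset_inter_left ih)
    · exact gammaP_mono N k (Finset.sdiff_subset_sdiff ih le_rfl)

/-- Peeling off the first test: the remaining tests form a strategy started from the candidate
set left by the first answer. -/
theorem Dadapt_cons (Γ : Finset ℕ → Finset ℕ) (σ : List Bool → Finset ℕ) (D : Finset ℕ)
    (b : Bool) (y : ℕ → Bool) (i : ℕ) :
    Dadapt Γ σ D (fun j => Nat.casesOn j b y) (i + 1) =
      Dadapt Γ (fun l => σ (b :: l)) (if b then Γ (σ [] ∩ D) else Γ (D \ σ [])) y i := by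
  induction i with
  | zero => simp [Dadapt]
  | succ i ih =>
    rw [Dadapt, ih]
    simp only [Dadapt, List.range_succ_eq_map, List.map_cons, List.map_map]
    rfl

theorem pathStep_central (N m : ℕ) {A : Finset ℕ} (h : ∀ x ∈ A, m + 1 + 1 ≤ x ∧ x + (m + 1) ≤ N) :
    ∀ x ∈ pathStep N A, m + 1 ≤ x ∧ x + m ≤ N := by
  intro x hx
  simp only [pathStep, Finset.mem_filter] at hx
  obtain ⟨-, i, hi, h'⟩ := hx
  have := h i hi
  omega

theorem card_pathStep (N : ℕ) {A : Finset ℕ} (hA : A.Nonempty)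
    (h : ∀ x ∈ A, 2 ≤ x ∧ x + 1 ≤ N) :
    (pathStep N A).Nonempty ∧ A.card + 2 ≤ (pathStep N A).card := by
  -- The step adds the successor of the maximum and the predecessor of the minimum.
  have hsub : insert (A.max' hA + 1) (insert (A.min' hA - 1) A) ⊆ pathStep N A := by
    intro x hx
    simp only [pathStep, Finset.mem_filter, Finset.mem_Icc]
    simp only [Finset.mem_insert] at hx
    have h1 := h _ (A.max'_mem hA)
    have h2 := h _ (A.min'_mem hA)
    rcases hx with hx | hx | hx
    · exact ⟨by omega, _, A.max'_mem hA, by omega⟩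
    · exact ⟨by omega, _, A.min'_mem hA, by omega⟩
    · have := h x hx
      exact ⟨by omega, x, hx, by omega⟩
  have h2 := h _ (A.min'_mem hA)
  have hmm := A.min'_le_max' hA
  have hn1 : A.min' hA - 1 ∉ A := fun hm => by
    have := A.min'_le _ hm
    omega
  have hn2 : A.max' hA + 1 ∉ insert (A.min' hA - 1) A := fun hm => by
    rcases Finset.mem_insert.1 hm with hm | hm
    · omega
    · have := A.le_max' _ hm
      omega
  refine ⟨⟨_, hsub (Finset.mem_insert_self _ _)⟩, ?_⟩
  have := Finset.card_le_card hsub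
  rw [Finset.card_insert_of_notMem hn2, Finset.card_insert_of_notMem hn1] at this
  omega

theorem card_gammaP (N k : ℕ) {A : Finset ℕ} (hA : A.Nonempty)
    (h : ∀ x ∈ A, k + 1 ≤ x ∧ x + k ≤ N) : A.card + 2 * k ≤ (GammaP N k A).card := by
  induction k generalizing A with
  | zero => simp [GammaP]
  | succ k ih =>
    obtain ⟨hne, hc⟩ := card_pathStep N hA fun x hx => by
      have := h x hx
      omega
    have := ih hne (pathStep_central N k h)
    change _ ≤ (GammaP N k (pathStep N A)).card
    omega

theorem gammaP_central (N m k : ℕ) {A : Finset ℕ}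
    (h : ∀ x ∈ A, m + k + 1 ≤ x ∧ x + (m + k) ≤ N) :
    ∀ x ∈ GammaP N k A, m + 1 ≤ x ∧ x + m ≤ N := by
  induction k generalizing A with
  | zero => exact h
  | succ k ih => exact ih (pathStep_central N (m + k) h)

/-- Size bound for an initial candidate set so far from the ends that no walk of `n` moves
can leave the path. -/
theorem card_le_of_central (N k s : ℕ) (hs : 4 * k ≤ s) (n : ℕ) (σ : List Bool → Finset ℕ)
    (D : Finset ℕ) (hD : ∀ x ∈ D, n * k + 1 ≤ x ∧ x + n * k ≤ N)
    (h : ∀ y : ℕ → Bool, ∃ i ≤ n, (Dadapt (GammaP N k) σ D y i).card ≤ s) :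
    D.card ≤ (s - 4 * k) * 2 ^ n + 4 * k := by
  induction n generalizing σ D with
  | zero =>
    obtain ⟨i, hi, hc⟩ := h fun _ => true
    obtain rfl : i = 0 := by omega
    simp only [Dadapt] at hc
    omega
  | succ n ih =>
    have hpow : (s - 4 * k) * 2 ^ (n + 1) = 2 * ((s - 4 * k) * 2 ^ n) := by ring
    have hle : s - 4 * k ≤ (s - 4 * k) * 2 ^ n := Nat.le_mul_of_pos_right _ (by positivity)
    by_cases hDs : D.card ≤ s
    · omega
    -- Each answer leaves a set `A ⊆ D` whose neighborhood must be handled with `n` tests.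
    have key : ∀ (b : Bool) (A : Finset ℕ), A ⊆ D →
        (if b then GammaP N k (σ [] ∩ D) else GammaP N k (D \ σ [])) = GammaP N k A →
        A.card ≤ (s - 4 * k) * 2 ^ n + 2 * k := by
      intro b A hA hb
      rcases A.eq_empty_or_nonempty with rfl | hne
      · simp
      have hA' : ∀ x ∈ A, n * k + k + 1 ≤ x ∧ x + (n * k + k) ≤ N := fun x hx => by
        have := hD x (hA hx)
        rwa [Nat.succ_mul] at this
      have h1 := card_gammaP N k hne fun x hx => by
        have := hA' x hx
        omega
      have h2 := ih (fun l => σ (b :: l)) (GammaP N k A) (gammaP_central N (n * k) k hA') fun y => by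
        obtain ⟨i, hi, hc⟩ := h fun j => Nat.casesOn j b y
        cases i with
        | zero => exact absurd hc hDs
        | succ i =>
          rw [Dadapt_cons, hb] at hc
          exact ⟨i, by omega, hc⟩
      omega
    have h1 := key true (σ [] ∩ D) Finset.inter_subset_right rfl
    have h2 := key false (D \ σ []) Finset.sdiff_subset rfl
    have h3 := Finset.card_sdiff_add_card_inter D (σ [])
    rw [Finset.inter_comm] at h3
    omega

/-- Theorem 4: for `k ≥ 1`, `n ≥ 0` and `s ≥ 4k`,
`N_p(n,s) ≤ (s-4k)·2^n + k(2n+4)`. -/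
theorem path_Np_upper (k n s : ℕ) (hk : 1 ≤ k) (hs : 4 * k ≤ s) :
    ∀ N, pathSuccessful N k n s → N ≤ (s - 4 * k) * 2 ^ n + k * (2 * n + 4) := by
  rintro N ⟨σ, hσ⟩
  have hsub : Finset.Icc (n * k + 1) (N - n * k) ⊆ Finset.Icc 1 N := by
    intro x hx
    rw [Finset.mem_Icc] at hx ⊢
    omega
  have := card_le_of_central N k s hs n σ (Finset.Icc (n * k + 1) (N - n * k))
    (fun x hx => by
      rw [Finset.mem_Icc] at hx
      omega)
    (fun y => by
      by_cases hne : ∀ i ≤ n, (Dadapt (GammaP N k) σ (Finset.Icc 1 N) y i).Nonempty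
      · obtain ⟨i, hi, hc⟩ := hσ y hne
        exact ⟨i, hi, (Finset.card_le_card (Dadapt_mono N k σ y hsub i)).trans hc⟩
      · -- An empty candidate set has at most `s` elements.
        push Not at hne
        obtain ⟨i, hi, he⟩ := hne
        refine ⟨i, hi, (Finset.card_le_card (Dadapt_mono N k σ y hsub i)).trans ?_⟩
        simp [he])
  rw [Nat.card_Icc] at this
  have e : k * (2 * n + 4) = 2 * (n * k) + 4 * k := by ring
  omega
end

section
/- Let $k \ge 1$, $n \ge 0$ and $s \ge 4k$. Then the maximum $N$ such that there exists a $(P_N,s)$-successful adaptive strategy with $n$ tests is exactly $N_p(n,s) = (s-4k)2^n + k(2n+4)$. -/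
/-!
Every reachable candidate set is governed by two quantities: the size `M n = (s - 4k) 2^n + 4k`
of the largest interval that can be searched with `n` tests when the ends of the path play no
role (`M (n+1) = 2 M n - 4k`, since either half grows by `2k`), and the gain from the ends.

*Upper bound* (`card_le_of_successful`). A vertex at distance at least `kn` from both ends cannot
feel the ends during `n` tests. For a set `E` of such vertices contained in the candidate set,
each nonempty part of `E` cut out by a test grows by at least `2k` (`card_add_le_card_GammaP`), so
induction gives `|E| ≤ M n`. Only `2kn` vertices are closer to the ends, whence
`N ≤ M n + 2kn`; no finer isoperimetric analysis near the ends is needed.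

*Construction.* Bisect into intervals. A piece containing an end of the path grows by only `k`,
so an interval at one end may have `M n + kn` vertices (`successful_left`, `successful_right`),
and the whole path may have `2 (M n + kn - k) = M (n+1) + 2k(n+1)` vertices with `n + 1` tests.

An empty candidate set has at most `s` elements, so the consistency condition on the answers is
harmless, and `Successful` obeys the game recursion `successful_succ_iff`.
-/

open Finset

/-- The consistency condition on the answers can be dropped, since an empty set has at most `s`
elements. -/
theorem successful_iff (Γ : Finset ℕ → Finset ℕ) (D : Finset ℕ) (n s : ℕ) :
    Successful Γ D n s ↔ ∃ σ : List Bool → Finset ℕ, ∀ y : ℕ → Bool,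
      ∃ i ≤ n, (Dadapt Γ σ D y i).card ≤ s := by
  refine ⟨fun ⟨σ, h⟩ => ⟨σ, fun y => ?_⟩, fun ⟨σ, h⟩ => ⟨σ, fun y _ => h y⟩⟩
  by_cases hy : ∀ i ≤ n, (Dadapt Γ σ D y i).Nonempty
  · exact h y hy
  · push Not at hy
    obtain ⟨i, hi, he⟩ := hy
    exact ⟨i, hi, by simp [he]⟩

/-- The play from the second test on is a play of the strategy that has recorded the first
answer. -/
theorem Dadapt_shift (Γ : Finset ℕ → Finset ℕ) (σ : List Bool → Finset ℕ) (D : Finset ℕ)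
    (y : ℕ → Bool) (i : ℕ) :
    Dadapt Γ σ D y (i + 1) = Dadapt Γ (fun l => σ (y 0 :: l))
      (if y 0 then Γ (σ [] ∩ D) else Γ (D \ σ [])) (fun j => y (j + 1)) i := by
  induction i with
  | zero => simp [Dadapt]
  | succ i ih =>
    rw [Dadapt, ih]
    conv_rhs => rw [Dadapt]
    simp only [List.range_succ_eq_map, List.map_cons, List.map_map]
    rfl

theorem successful_of_card_le {Γ : Finset ℕ → Finset ℕ} {D : Finset ℕ} {n s : ℕ}
    (h : D.card ≤ s) : Successful Γ D n s :=
  ⟨fun _ => ∅, fun _ _ => ⟨0, Nat.zero_le _, h⟩⟩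

theorem successful_zero_iff (Γ : Finset ℕ → Finset ℕ) (D : Finset ℕ) (s : ℕ) :
    Successful Γ D 0 s ↔ D.card ≤ s := by
  refine ⟨fun h => ?_, successful_of_card_le⟩
  obtain ⟨σ, h⟩ := (successful_iff _ _ _ _).1 h
  obtain ⟨i, hi, hc⟩ := h fun _ => true
  obtain rfl : i = 0 := by omega
  exact hc

theorem successful_succ_iff (Γ : Finset ℕ → Finset ℕ) (D : Finset ℕ) (n s : ℕ) :
    Successful Γ D (n + 1) s ↔ D.card ≤ s ∨
      ∃ T, Successful Γ (Γ (T ∩ D)) n s ∧ Successful Γ (Γ (D \ T)) n s := by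
  constructor
  · intro h
    obtain ⟨σ, h⟩ := (successful_iff _ _ _ _).1 h
    by_cases hD : D.card ≤ s
    · exact Or.inl hD
    right
    have key : ∀ b : Bool, Successful Γ (if b then Γ (σ [] ∩ D) else Γ (D \ σ [])) n s := by
      intro b
      refine (successful_iff _ _ _ _).2 ⟨fun l => σ (b :: l), fun y => ?_⟩
      obtain ⟨i, hi, hc⟩ := h (fun j => Nat.casesOn j b y)
      cases i with
      | zero => exact absurd hc hD
      | succ i =>
        rw [Dadapt_shift] at hc
        exact ⟨i, by omega, hc⟩
    exact ⟨σ [], by simpa using key true, by simpa using key false⟩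
  · rintro (h | ⟨T, h₁, h₂⟩)
    · exact successful_of_card_le h
    obtain ⟨σ₁, h₁⟩ := (successful_iff _ _ _ _).1 h₁
    obtain ⟨σ₂, h₂⟩ := (successful_iff _ _ _ _).1 h₂
    refine (successful_iff _ _ _ _).2
      ⟨fun l => List.casesOn l T fun b l => if b then σ₁ l else σ₂ l, fun y => ?_⟩
    have key : ∃ i ≤ n, (Dadapt Γ (fun l => if y 0 then σ₁ l else σ₂ l)
        (if y 0 then Γ (T ∩ D) else Γ (D \ T)) (fun j => y (j + 1)) i).card ≤ s := by
      cases y 0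
      · simpa using h₂ fun j => y (j + 1)
      · simpa using h₁ fun j => y (j + 1)
    obtain ⟨i, hi, hc⟩ := key
    refine ⟨i + 1, by omega, ?_⟩
    rw [Dadapt_shift]
    exact hc

theorem pathStep_mono_s7 (N : ℕ) : Monotone (pathStep N) := by
  intro A B h j hj
  simp only [pathStep, mem_filter] at hj ⊢
  obtain ⟨hj, i, hi, h'⟩ := hj
  exact ⟨hj, i, h hi, h'⟩

theorem GammaP_mono (N k : ℕ) : Monotone (GammaP N k) := (pathStep_mono_s7 N).iterate k

/-- The neighborhood of a set between `a` and `b` lies between `a - k` (truncated at `0`) and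
`b + k`. -/
theorem GammaP_bounds {N : ℕ} (k : ℕ) {A : Finset ℕ} {a b : ℕ}
    (hA : ∀ x ∈ A, a ≤ x ∧ x ≤ b) : ∀ x ∈ GammaP N k A, a ≤ x + k ∧ x ≤ b + k := by
  induction k with
  | zero => simpa [GammaP] using hA
  | succ k ih =>
    intro x hx
    rw [GammaP, Function.iterate_succ_apply'] at hx
    simp only [pathStep, mem_filter] at hx
    obtain ⟨-, i, hi, h⟩ := hx
    have := ih i hi
    omega

theorem GammaP_range {N k : ℕ} (hk : 1 ≤ k) (A : Finset ℕ) :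
    ∀ x ∈ GammaP N k A, 1 ≤ x ∧ x ≤ N := by
  intro x hx
  obtain ⟨k, rfl⟩ := Nat.exists_eq_add_of_le' hk
  rw [GammaP, Function.iterate_succ_apply'] at hx
  simp only [pathStep, mem_filter, mem_Icc] at hx
  exact hx.1

theorem card_add_two_le_card_pathStep {N : ℕ} {A : Finset ℕ} (hne : A.Nonempty)
    (hA : ∀ x ∈ A, 2 ≤ x ∧ x + 1 ≤ N) : A.card + 2 ≤ (pathStep N A).card := by
  have h1 := hA _ (A.min'_mem hne)
  have h2 := hA _ (A.max'_mem hne)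
  have h12 := A.min'_le _ (A.max'_mem hne)
  have hlo : A.min' hne - 1 ∉ A := fun h => by
    have := A.min'_le _ h
    omega
  have hhi : A.max' hne + 1 ∉ insert (A.min' hne - 1) A := fun h => by
    rcases mem_insert.1 h with h | h
    · omega
    · have := A.le_max' _ h
      omega
  have hc : A.card + 2 = (insert (A.max' hne + 1) (insert (A.min' hne - 1) A)).card := by
    rw [card_insert_of_notMem hhi, card_insert_of_notMem hlo]
  rw [hc]
  refine card_le_card fun x hx => ?_
  simp only [pathStep, mem_filter, mem_Icc]
  rcases mem_insert.1 hx with rfl | hx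
  · exact ⟨by omega, _, A.max'_mem hne, by omega⟩
  rcases mem_insert.1 hx with rfl | hx
  · exact ⟨by omega, _, A.min'_mem hne, by omega⟩
  · exact ⟨by have := hA x hx; omega, x, hx, Or.inl rfl⟩

/-- Away from the ends, a nonempty set grows by at least `k` on either side. -/
theorem card_add_le_card_GammaP {N : ℕ} (k : ℕ) {A : Finset ℕ} (hne : A.Nonempty)
    (hA : ∀ x ∈ A, k + 1 ≤ x ∧ x + k ≤ N) : A.card + 2 * k ≤ (GammaP N k A).card := by
  induction k generalizing A with
  | zero => simp [GammaP]
  | succ k ih =>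
    have h1 := card_add_two_le_card_pathStep (N := N) hne fun x hx => by
      have := hA x hx
      omega
    have h2 := ih (A := pathStep N A) (card_pos.1 (by omega)) fun x hx => by
      simp only [pathStep, mem_filter] at hx
      obtain ⟨-, i, hi, h⟩ := hx
      have := hA i hi
      omega
    have h3 : GammaP N (k + 1) A = GammaP N k (pathStep N A) := by
      rw [GammaP, Function.iterate_succ_apply, GammaP]
    rw [h3]
    omega

/-- A successfully searchable set has at most `M n = (s - 4k) 2^n + 4k` vertices at distance at
least `kn` from the ends of the path. -/
theorem card_le_of_successful {N k s : ℕ} (hs : 4 * k ≤ s) (n : ℕ) {D E : Finset ℕ}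
    (hD : Successful (GammaP N k) D n s) (hED : E ⊆ D)
    (hE : ∀ x ∈ E, k * n + 1 ≤ x ∧ x + k * n ≤ N) :
    E.card ≤ (s - 4 * k) * 2 ^ n + 4 * k := by
  induction n generalizing D E with
  | zero =>
    have := (card_le_card hED).trans ((successful_zero_iff _ _ _).1 hD)
    omega
  | succ n ih =>
    have hpow : (s - 4 * k) * 2 ^ (n + 1) = 2 * ((s - 4 * k) * 2 ^ n) := by ring
    have hq : s - 4 * k ≤ (s - 4 * k) * 2 ^ n := Nat.le_mul_of_pos_right _ (by positivity)
    have hkn : k * (n + 1) = k * n + k := by ring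
    rw [hpow]
    rw [hkn] at hE
    rcases (successful_succ_iff _ _ _ _).1 hD with h | ⟨T, h₁, h₂⟩
    · have := (card_le_card hED).trans h
      omega
    -- Either part of `E` satisfies the induction hypothesis after growing by at least `2k`.
    have part : ∀ {C F : Finset ℕ}, Successful (GammaP N k) (GammaP N k C) n s → F ⊆ C → F ⊆ E →
        F.card + 2 * k ≤ (s - 4 * k) * 2 ^ n + 4 * k := by
      intro C F hC hFC hFE
      rcases F.eq_empty_or_nonempty with rfl | hne
      · simp only [card_empty]
        omega
      refine (card_add_le_card_GammaP k hne fun x hx => ?_).trans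
        (ih hC (GammaP_mono N k hFC) fun x hx => ?_)
      · have := hE x (hFE hx)
        generalize k * n = K at *
        omega
      · have := GammaP_bounds k (a := k * n + k + 1) (b := N - (k * n + k)) (fun z hz => by
          have := hE z (hFE hz)
          omega) x hx
        obtain ⟨z, hz⟩ := hne
        have := hE z (hFE hz)
        omega
    have p₁ := part h₁ (inter_subset_inter_left hED) inter_subset_right
    have p₂ := part h₂ (sdiff_subset_sdiff hED subset_rfl) sdiff_subset
    have := card_sdiff_add_card_inter E T
    rw [inter_comm] at this
    omega

theorem card_le_of_bounds {D : Finset ℕ} {a b m : ℕ} (hD : ∀ x ∈ D, a ≤ x ∧ x ≤ b)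
    (hm : b + 1 ≤ a + m) : D.card ≤ m := by
  have := card_le_card (t := Icc a b) fun x hx => mem_Icc.2 (hD x hx)
  rw [Nat.card_Icc] at this
  omega

/-- An interval of `M n = (s - 4k) 2^n + 4k` vertices can be searched wherever it lies: cut it so
that the lower part, once grown by `k` on both sides, has `M (n-1)` vertices. -/
theorem successful_middle {N k s : ℕ} (hk : 1 ≤ k) (hs : 4 * k ≤ s) (n : ℕ) {D : Finset ℕ} {a b : ℕ}
    (hD : ∀ x ∈ D, a ≤ x ∧ x ≤ b) (hab : b + 1 ≤ a + ((s - 4 * k) * 2 ^ n + 4 * k)) :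
    Successful (GammaP N k) D n s := by
  induction n generalizing D a b with
  | zero => exact successful_of_card_le (card_le_of_bounds hD (by omega))
  | succ n ih =>
    have hpow : (s - 4 * k) * 2 ^ (n + 1) = 2 * ((s - 4 * k) * 2 ^ n) := by ring
    rw [hpow] at hab
    generalize hQ : (s - 4 * k) * 2 ^ n = Q at *
    refine (successful_succ_iff _ _ _ _).2 (Or.inr ⟨range (a + Q + 2 * k), ?_, ?_⟩)
    · refine ih (a := a - k) (b := a + Q + 2 * k - 1 + k) (fun x hx => ?_) ?_
      · have := GammaP_bounds k (a := a) (b := a + Q + 2 * k - 1) (fun z hz => by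
          simp only [mem_inter, mem_range] at hz
          have := hD z hz.2
          omega) x hx
        omega
      · omega
    · refine ih (a := a + Q + 2 * k - k) (b := b + k) (fun x hx => ?_) (by omega)
      have := GammaP_bounds k (a := a + Q + 2 * k) (b := b) (fun z hz => by
        simp only [mem_sdiff, mem_range] at hz
        have := hD z hz.1
        omega) x hx
      omega

/-- An initial segment of the path can have `kn` more vertices, because the part keeping the end
grows on one side only. -/
theorem successful_left {N k s : ℕ} (hk : 1 ≤ k) (hs : 4 * k ≤ s) (n : ℕ) {D : Finset ℕ} {b : ℕ}
    (hD : ∀ x ∈ D, 1 ≤ x ∧ x ≤ b) (hb : b ≤ (s - 4 * k) * 2 ^ n + k * n + 4 * k) :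
    Successful (GammaP N k) D n s := by
  induction n generalizing D b with
  | zero => exact successful_of_card_le (card_le_of_bounds hD (by omega))
  | succ n ih =>
    have hpow : (s - 4 * k) * 2 ^ (n + 1) = 2 * ((s - 4 * k) * 2 ^ n) := by ring
    have hkn : k * (n + 1) = k * n + k := by ring
    rw [hpow, hkn] at hb
    have hmid := @successful_middle N k s hk hs n
    generalize (s - 4 * k) * 2 ^ n = Q at *
    generalize k * n = K at *
    refine (successful_succ_iff _ _ _ _).2 (Or.inr ⟨range (Q + K + 3 * k + 1), ?_, ?_⟩)
    · refine ih (b := Q + K + 4 * k) (fun x hx => ?_) le_rfl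
      have := GammaP_bounds k (a := 1) (b := Q + K + 3 * k) (fun z hz => by
        simp only [mem_inter, mem_range] at hz
        have := hD z hz.2
        omega) x hx
      have := GammaP_range hk _ x hx
      omega
    · refine hmid (a := Q + K + 2 * k + 1) (b := b + k) (fun x hx => ?_) (by omega)
      have := GammaP_bounds k (a := Q + K + 3 * k + 1) (b := b) (fun z hz => by
        simp only [mem_sdiff, mem_range] at hz
        have := hD z hz.1
        omega) x hx
      omega

/-- Mirror image of `successful_left`, for segments reaching up to `N`. -/
theorem successful_right {N k s : ℕ} (hk : 1 ≤ k) (hs : 4 * k ≤ s) (n : ℕ) {D : Finset ℕ} {a : ℕ}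
    (hD : ∀ x ∈ D, a ≤ x ∧ x ≤ N) (ha : N + 1 ≤ a + ((s - 4 * k) * 2 ^ n + k * n + 4 * k)) :
    Successful (GammaP N k) D n s := by
  induction n generalizing D a with
  | zero => exact successful_of_card_le (card_le_of_bounds hD (by omega))
  | succ n ih =>
    have hpow : (s - 4 * k) * 2 ^ (n + 1) = 2 * ((s - 4 * k) * 2 ^ n) := by ring
    have hkn : k * (n + 1) = k * n + k := by ring
    rw [hpow, hkn] at ha
    have hmid := @successful_middle N k s hk hs n
    generalize (s - 4 * k) * 2 ^ n = Q at *
    generalize k * n = K at *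
    refine (successful_succ_iff _ _ _ _).2 (Or.inr ⟨range (a + Q + 2 * k), ?_, ?_⟩)
    · refine hmid (a := a - k) (b := a + Q + 2 * k - 1 + k) (fun x hx => ?_) (by omega)
      have := GammaP_bounds k (a := a) (b := a + Q + 2 * k - 1) (fun z hz => by
        simp only [mem_inter, mem_range] at hz
        have := hD z hz.2
        omega) x hx
      omega
    · refine ih (a := a + Q + k) (fun x hx => ?_) (by omega)
      have := GammaP_bounds k (a := a + Q + 2 * k) (b := N) (fun z hz => by
        simp only [mem_sdiff, mem_range] at hz
        have := hD z hz.1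
        omega) x hx
      have := GammaP_range hk _ x hx
      omega

/-- Corollary 1: for `k ≥ 1`, `n ≥ 0` and `s ≥ 4k`, the maximum `N` admitting a
`(P_N,s)`-successful strategy with `n` tests is exactly `(s-4k)·2^n + k(2n+4)`. -/
theorem path_Np_eq (k n s : ℕ) (hk : 1 ≤ k) (hs : 4 * k ≤ s) :
    pathSuccessful ((s - 4 * k) * 2 ^ n + k * (2 * n + 4)) k n s ∧
    ∀ N, pathSuccessful N k n s → N ≤ (s - 4 * k) * 2 ^ n + k * (2 * n + 4) := by
  constructor
  · cases n with
    | zero =>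
      refine successful_of_card_le ?_
      simp only [Nat.card_Icc]
      omega
    | succ n =>
      have hN : (s - 4 * k) * 2 ^ (n + 1) + k * (2 * (n + 1) + 4)
          = 2 * ((s - 4 * k) * 2 ^ n) + 2 * (k * n) + 6 * k := by ring
      rw [hN, pathSuccessful]
      have hl := fun N => @successful_left N k s hk hs n
      have hr := fun N => @successful_right N k s hk hs n
      generalize (s - 4 * k) * 2 ^ n = Q at *
      generalize k * n = K at *
      refine (successful_succ_iff _ _ _ _).2 (Or.inr ⟨range (Q + K + 3 * k + 1), ?_, ?_⟩)
      · refine hl _ (b := Q + K + 4 * k) (fun x hx => ?_) le_rfl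
        have := GammaP_bounds k (a := 1) (b := Q + K + 3 * k) (fun z hz => by
          simp only [mem_inter, mem_range, mem_Icc] at hz
          omega) x hx
        have := GammaP_range hk _ x hx
        omega
      · refine hr _ (a := Q + K + 2 * k + 1) (fun x hx => ?_) (by omega)
        have := GammaP_bounds k (a := Q + K + 3 * k + 1) (b := 2 * Q + 2 * K + 6 * k) (fun z hz => by
          simp only [mem_sdiff, mem_range, mem_Icc] at hz
          omega) x hx
        have := GammaP_range hk _ x hx
        omega
  · intro N hN
    have h := card_le_of_successful hs n hN (E := Icc (k * n + 1) (N - k * n))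
      (fun x hx => by
        simp only [mem_Icc] at hx ⊢
        generalize k * n = K at *
        omega)
      (fun x hx => by
        simp only [mem_Icc] at hx
        omega)
    rw [Nat.card_Icc] at h
    have : k * (2 * n + 4) = 2 * (k * n) + 4 * k := by ring
    omega
end

section
/- (Half-open-path variant.) Let $k \ge 1$, $n \ge 0$ and $s \ge 4k$. On the semi-infinite path $\{1,2,\dots\}$ (the target may move up to $k$ steps after each test, never to a position left of $1$, but without a right boundary), suppose the target starts in $\{1,\dots,x\}$. If $x \le 2^n(s-4k)+(n+4)k$, then there is an adaptive strategy with $n$ tests that locates the target with accuracy $s$, i.e. $N^H(n,s) \ge 2^n(s-4k)+(n+4)k$. -/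
/-!
Every candidate set is enclosed in an interval and each test cuts that interval in two.
Write `a = s - 4 * k`. An interval away from the boundary gains `k` on each side after a test, so
halving takes length `2 ^ (n + 1) * a + 4 * k` to `(2 ^ n * a + 2 * k) + 2 * k`
(`winsWithin_of_subset_Ico`); with no tests left the length is `a + 4 * k = s`.
An initial segment `{1, …, p}` only gains `k`, so the first cut is made off-centre:
a segment of length `2 ^ (n + 1) * a + (n + 5) * k` is cut after `p = 2 ^ n * a + (n + 3) * k`,
which leaves a segment of the same kind for `n` tests on the left, and an interval
of length `2 ^ n * a + 2 * k` on the right (`winsWithin_of_subset_Icc`).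

`WinsWithin` phrases solvability as a recursion on the number of tests, and
`exists_strategy_of_winsWithin` glues the chosen test sets into one adaptive strategy.
-/

open Finset

/-- `k`-neighborhood on the semi-infinite path `{1, 2, ...}`:
`Γ_k(A) = {j ≥ 1 : |j - i| ≤ k for some i ∈ A}`. -/
def GammaH (k : ℕ) (A : Finset ℕ) : Finset ℕ :=
  A.biUnion fun i => Finset.Icc (max 1 (i - k)) (i + k)

/-- Candidate sets `𝒟_i` for an adaptive strategy `σ` (mapping the list of previous
answers to the next test set), an answer sequence `y`, and initial candidate set `D0`,
in the half-open path model. -/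
def DadaptH (k : ℕ) (σ : List Bool → Finset ℕ) (D0 : Finset ℕ)
    (y : ℕ → Bool) : ℕ → Finset ℕ
  | 0 => D0
  | i + 1 =>
      let D := DadaptH k σ D0 y i
      let T := σ ((List.range i).map y)
      if y i then GammaH k (T ∩ D) else GammaH k (D \ T)

/-- From the candidate set `D`, some `n` further adaptive tests always leave at most `s`
candidates, whatever the answers. Empty candidate sets are allowed: they count as success. -/
def WinsWithin (k s : ℕ) : ℕ → Finset ℕ → Prop
  | 0, D => D.card ≤ s
  | n + 1, D => ∃ T : Finset ℕ, WinsWithin k s n (GammaH k (T ∩ D)) ∧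
      WinsWithin k s n (GammaH k (D \ T))

/-- Running a strategy for `i + 1` tests amounts to performing the first test and then running
the strategy that remembers the first answer. -/
lemma DadaptH_succ_eq (k : ℕ) (σ : List Bool → Finset ℕ) (D : Finset ℕ) (y : ℕ → Bool) (i : ℕ) :
    DadaptH k σ D y (i + 1) =
      DadaptH k (fun l => σ (y 0 :: l))
        (if y 0 then GammaH k (σ [] ∩ D) else GammaH k (D \ σ []))
        (fun j => y (j + 1)) i := by
  induction i with
  | zero => simp [DadaptH]
  | succ i ih =>
    rw [DadaptH, ih]
    conv_rhs => rw [DadaptH]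
    have h : (List.range (i + 1)).map y = y 0 :: (List.range i).map (fun j => y (j + 1)) := by
      simp [List.range_succ_eq_map, Function.comp_def]
    simp only [h]

lemma exists_strategy_of_winsWithin (k s n : ℕ) (D : Finset ℕ) (h : WinsWithin k s n D) :
    ∃ σ : List Bool → Finset ℕ, ∀ y : ℕ → Bool, (DadaptH k σ D y n).card ≤ s := by
  induction n generalizing D with
  | zero => exact ⟨fun _ => ∅, fun _ => h⟩
  | succ n ih =>
    obtain ⟨T, h₁, h₀⟩ := h
    obtain ⟨σ₁, hσ₁⟩ := ih _ h₁
    obtain ⟨σ₀, hσ₀⟩ := ih _ h₀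
    refine ⟨fun l => match l with
      | [] => T
      | true :: l => σ₁ l
      | false :: l => σ₀ l, fun y => ?_⟩
    rw [DadaptH_succ_eq]
    cases hy : y 0
    · simpa using hσ₀ fun j => y (j + 1)
    · simpa using hσ₁ fun j => y (j + 1)

lemma mem_GammaH {k : ℕ} {A : Finset ℕ} {j : ℕ} :
    j ∈ GammaH k A ↔ ∃ i ∈ A, (1 ≤ j ∧ i - k ≤ j) ∧ j ≤ i + k := by
  simp [GammaH]

/-- If `l < k`, truncation moves the left end by less than `k`, and the enclosing interval on the
right is then longer than needed. -/
lemma GammaH_subset_Ico {k l w : ℕ} {A : Finset ℕ} (h : A ⊆ Ico l (l + w)) :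
    GammaH k A ⊆ Ico (l - k) (l - k + (w + 2 * k)) := by
  intro j hj
  obtain ⟨i, hi, hij⟩ := mem_GammaH.1 hj
  have := mem_Ico.1 (h hi)
  rw [mem_Ico]
  omega

/-- The neighbourhood of an initial segment grows only to the right. -/
lemma GammaH_subset_Icc {k p : ℕ} {A : Finset ℕ} (h : A ⊆ Icc 1 p) :
    GammaH k A ⊆ Icc 1 (p + k) := by
  intro j hj
  obtain ⟨i, hi, hij⟩ := mem_GammaH.1 hj
  have := mem_Icc.1 (h hi)
  rw [mem_Icc]
  omega

/-- Bisection of an interval, with no use of the boundary. -/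
lemma winsWithin_of_subset_Ico (k a n l : ℕ) (D : Finset ℕ)
    (h : D ⊆ Ico l (l + (2 ^ n * a + 4 * k))) : WinsWithin k (a + 4 * k) n D := by
  induction n generalizing l D with
  | zero => simpa [WinsWithin] using card_le_card h
  | succ n ih =>
    have hw : 2 ^ n * a + 4 * k = (2 ^ n * a + 2 * k) + 2 * k := by ring
    have hpow : 2 ^ (n + 1) * a = 2 * (2 ^ n * a) := by ring
    rw [hpow] at h
    rw [hw] at ih
    generalize 2 ^ n * a = b at *
    refine ⟨Ico l (l + (b + 2 * k)), ih _ _ (GammaH_subset_Ico inter_subset_left),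
      ih _ _ (GammaH_subset_Ico (l := l + (b + 2 * k)) fun i hi => ?_)⟩
    rw [mem_sdiff] at hi
    have := mem_Ico.1 (h hi.1)
    simp only [mem_Ico] at hi ⊢
    omega

/-- Off-centre cutting of an initial segment. -/
lemma winsWithin_of_subset_Icc (k a n : ℕ) (D : Finset ℕ)
    (h : D ⊆ Icc 1 (2 ^ n * a + (n + 4) * k)) : WinsWithin k (a + 4 * k) n D := by
  induction n generalizing D with
  | zero => simpa [WinsWithin] using card_le_card h
  | succ n ih =>
    have hp : 2 ^ n * a + (n + 4) * k = (2 ^ n * a + (n + 3) * k) + k := by ring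
    have hx : 2 ^ (n + 1) * a + (n + 1 + 4) * k =
        (2 ^ n * a + (n + 3) * k) + (2 ^ n * a + 2 * k) := by ring
    have hw : 2 ^ n * a + 4 * k = (2 ^ n * a + 2 * k) + 2 * k := by ring
    rw [hx] at h
    rw [hp] at ih
    refine ⟨Icc 1 (2 ^ n * a + (n + 3) * k), ih _ (GammaH_subset_Icc inter_subset_left),
      winsWithin_of_subset_Ico k a n (2 ^ n * a + (n + 3) * k + 1 - k) _ ?_⟩
    rw [hw]
    refine GammaH_subset_Ico fun i hi => ?_
    rw [mem_sdiff] at hi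
    have := mem_Icc.1 (h hi.1)
    simp only [mem_Icc, mem_Ico] at hi ⊢
    omega

/-- Claim 2 (half-open-path variant): for `k ≥ 1`, `s ≥ 4k`, if the target starts in
`{1,…,x}` with `x ≤ 2^n(s-4k)+(n+4)k`, then there is an adaptive strategy with `n`
tests locating it with accuracy `s`; i.e. `N^H(n,s) ≥ 2^n(s-4k)+(n+4)k`. -/
theorem half_open_path_lower (k n s : ℕ) (hk : 1 ≤ k) (hs : 4 * k ≤ s)
    (x : ℕ) (hx : x ≤ 2 ^ n * (s - 4 * k) + (n + 4) * k) :
    ∃ σ : List Bool → Finset ℕ, ∀ y : ℕ → Bool,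
      (∀ i ≤ n, (DadaptH k σ (Finset.Icc 1 x) y i).Nonempty) →
      ∃ i ≤ n, (DadaptH k σ (Finset.Icc 1 x) y i).card ≤ s := by
  obtain ⟨a, rfl⟩ : ∃ a, s = a + 4 * k := ⟨s - 4 * k, by omega⟩
  rw [Nat.add_sub_cancel] at hx
  obtain ⟨σ, hσ⟩ := exists_strategy_of_winsWithin k _ n _
    (winsWithin_of_subset_Icc k a n _ (Icc_subset_Icc_right hx))
  exact ⟨σ, fun y _ => ⟨n, le_rfl, hσ y⟩⟩
end

section
/- Let $k = 1$. For the path $P_N$, the minimum number $n$ of tests of a non-adaptive $(P_N,4)$-successful strategy equals $\lceil N/2 \rceil - 2$; in particular, the optimal non-adaptive strategy uses the same number of tests as the optimal adaptive strategy. -/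
/-!
Write `M = ⌈N/2⌉`.

*Lower bound.* The adversary keeps five consecutive vertices `a, …, a+4` inside the candidate set.
Any test splits them into two parts, one of which has at least three vertices. The gaps in that part
have length at most two, so its neighborhood is the full interval from one below its minimum to one
above its maximum, and hence contains five consecutive vertices again, shifted by at most one.
Starting from `a = n + 1`, this survives `n` tests as soon as `N ≥ 2n + 5`, even against an adaptive
searcher (`majority_step`, `le_of_pathSuccessful`).

*Upper bound.* The first test asks for the left half. From then on the candidates lie in an initial
interval or in a final interval, and each test separates the two innermost vertices of both possible
intervals from the rest: either the target is among these two and at most four candidates remain,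
or the interval shrinks by one. As both intervals are handled by one symmetric test set, no
adaptivity is needed (`pathNASuccessful_half`).
-/

open Finset

/-- Candidate sets `𝒟_i` for a non-adaptive strategy: a fixed sequence `T` of test
sets (not depending on the answers `y`), executed sequentially. -/
def DseqNA (Γ : Finset ℕ → Finset ℕ) (T : ℕ → Finset ℕ) (D0 : Finset ℕ)
    (y : ℕ → Bool) : ℕ → Finset ℕ
  | 0 => D0
  | i + 1 =>
      let D := DseqNA Γ T D0 y i
      if y i then Γ (T i ∩ D) else Γ (D \ T i)

/-- There is a non-adaptive strategy with `n` tests that is successful with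
accuracy `s`. -/
def NASuccessful (Γ : Finset ℕ → Finset ℕ) (D0 : Finset ℕ) (n s : ℕ) : Prop :=
  ∃ T : ℕ → Finset ℕ, ∀ y : ℕ → Bool,
    (∀ i ≤ n, (DseqNA Γ T D0 y i).Nonempty) →
    ∃ i ≤ n, (DseqNA Γ T D0 y i).card ≤ s

/-- A non-adaptive `(P_N, s)`-successful strategy with `n` tests exists. -/
def pathNASuccessful (N k n s : ℕ) : Prop :=
  NASuccessful (GammaP N k) (Finset.Icc 1 N) n s

lemma mem_pathStep {N j : ℕ} {A : Finset ℕ} :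
    j ∈ pathStep N A ↔ (1 ≤ j ∧ j ≤ N) ∧ ∃ i ∈ A, j = i ∨ i + 1 = j ∨ j + 1 = i := by
  simp [pathStep]

lemma GammaP_one (N : ℕ) (A : Finset ℕ) : GammaP N 1 A = pathStep N A := rfl

/-- At least three of five consecutive interior vertices have a neighborhood that again contains five
consecutive vertices, shifted by at most one: if `m` is the least of them, the new interval starts at
`m - 1`. -/
lemma triple_step {N a : ℕ} {A : Finset ℕ} (ha : 2 ≤ a) (haN : a + 5 ≤ N)
    (h3 : 3 ≤ ((Icc a (a + 4)).filter (· ∈ A)).card) :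
    ∃ a', a' ≤ a + 1 ∧ a ≤ a' + 1 ∧ Icc a' (a' + 4) ⊆ pathStep N A := by
  have hI : Icc a (a + 4) = {a, a + 1, a + 2, a + 3, a + 4} := by
    ext x; simp only [mem_Icc, mem_insert, mem_singleton]; omega
  have key : ∀ m, a ≤ m + 1 → m ≤ a + 1 →
      (∀ d < 5, ∃ i ∈ A, m + d = i ∨ i + 1 = m + d ∨ m + d + 1 = i) →
      ∃ a', a' ≤ a + 1 ∧ a ≤ a' + 1 ∧ Icc a' (a' + 4) ⊆ pathStep N A := by
    intro m h1 h2 h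
    refine ⟨m, h2, h1, fun j hj => ?_⟩
    rw [mem_Icc] at hj
    rw [mem_pathStep]
    refine ⟨by omega, ?_⟩
    have := h (j - m) (by omega)
    rwa [Nat.add_sub_cancel' hj.1] at this
  rw [hI] at h3
  by_cases h0 : a ∈ A
  · apply key (a - 1) (by omega) (by omega)
    intro d hd
    by_cases k1 : a + 1 ∈ A <;> by_cases k2 : a + 2 ∈ A <;> by_cases k3 : a + 3 ∈ A <;>
      by_cases k4 : a + 4 ∈ A <;>
      simp [filter_insert, filter_singleton, h0, k1, k2, k3, k4] at h3 <;>
      interval_cases d <;> grind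
  · by_cases k1 : a + 1 ∈ A
    · apply key a (by omega) (by omega)
      intro d hd
      by_cases k2 : a + 2 ∈ A <;> by_cases k3 : a + 3 ∈ A <;>
        by_cases k4 : a + 4 ∈ A <;>
        simp [filter_insert, filter_singleton, h0, k1, k2, k3, k4] at h3 <;>
        interval_cases d <;> grind
    · apply key (a + 1) (by omega) (by omega)
      intro d hd
      by_cases k2 : a + 2 ∈ A <;> by_cases k3 : a + 3 ∈ A <;>
        by_cases k4 : a + 4 ∈ A <;>
        simp [filter_insert, filter_singleton, h0, k1, k2, k3, k4] at h3 <;>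
        interval_cases d <;> grind

/-- One round of the adversary: whatever the test `T`, some answer leaves five consecutive
candidates, shifted by at most one. -/
lemma majority_step {N a : ℕ} {D : Finset ℕ} (T : Finset ℕ) (ha : 2 ≤ a) (haN : a + 5 ≤ N)
    (hD : Icc a (a + 4) ⊆ D) :
    ∃ b : Bool, ∃ a', a' ≤ a + 1 ∧ a ≤ a' + 1 ∧
      Icc a' (a' + 4) ⊆ if b then pathStep N (T ∩ D) else pathStep N (D \ T) := by
  have hsum := card_filter_add_card_filter_not (s := Icc a (a + 4)) (· ∈ T)
  rw [Nat.card_Icc] at hsum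
  by_cases h : 3 ≤ ((Icc a (a + 4)).filter (· ∈ T)).card
  · refine ⟨true, ?_⟩
    simp only [if_true]
    refine triple_step ha haN (h.trans (card_le_card fun x hx => ?_))
    grind
  · refine ⟨false, ?_⟩
    simp only [Bool.false_eq_true, if_false]
    have h' : 3 ≤ ((Icc a (a + 4)).filter (fun x => ¬ x ∈ T)).card := by omega
    refine triple_step ha haN (h'.trans (card_le_card fun x hx => ?_))
    grind

/-- The adversary can keep five consecutive candidates for `n` rounds; the answers are fixed one at
a time, each update leaving the earlier candidate sets unchanged. -/
lemma exists_adversary {N n : ℕ} (hN : 2 * n + 5 ≤ N) (σ : List Bool → Finset ℕ) (i : ℕ)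
    (hi : i ≤ n) :
    ∃ y : ℕ → Bool, ∀ j ≤ i, ∃ a, n + 1 ≤ a + j ∧ a ≤ n + 1 + j ∧
      Icc a (a + 4) ⊆ Dadapt (GammaP N 1) σ (Icc 1 N) y j := by
  induction i with
  | zero =>
    refine ⟨fun _ => true, fun j hj => ⟨n + 1, by omega, by omega, ?_⟩⟩
    obtain rfl : j = 0 := by omega
    exact Icc_subset_Icc (by omega) (by omega)
  | succ i ih =>
    obtain ⟨y, hy⟩ := ih (by omega)
    obtain ⟨a, h1, h2, h3⟩ := hy i le_rfl
    obtain ⟨b, a', h4, h5, h6⟩ :=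
      majority_step (N := N) (σ ((List.range i).map y)) (by omega) (by omega) h3
    have hlt : ∀ j < i, Function.update y i b j = y j := fun j hj =>
      Function.update_of_ne (by omega) _ _
    refine ⟨Function.update y i b, fun j hj => ?_⟩
    rcases Nat.lt_or_ge i j with hij | hij
    · obtain rfl : j = i + 1 := by omega
      refine ⟨a', by omega, by omega, ?_⟩
      have hl : (List.range i).map (Function.update y i b) = (List.range i).map y :=
        List.map_congr_left fun j hj => hlt j (List.mem_range.1 hj)
      simpa only [Dadapt, Dadapt_congr _ σ _ i hlt, hl, Function.update_self, GammaP_one] using h6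
    · rw [Dadapt_congr _ σ _ j fun k hk => hlt k (by omega)]
      exact hy j hij

lemma le_of_pathSuccessful {N n : ℕ} (h : pathSuccessful N 1 n 4) : (N + 1) / 2 - 2 ≤ n := by
  by_contra! hn
  obtain ⟨σ, hσ⟩ := h
  obtain ⟨y, hy⟩ := exists_adversary (N := N) (n := n) (by omega) σ n le_rfl
  obtain ⟨i, hi, hc⟩ := hσ y fun i hi => by
    obtain ⟨a, -, -, ha⟩ := hy i hi
    exact ⟨a, ha (by simp)⟩
  obtain ⟨a, -, -, ha⟩ := hy i hi
  have := card_le_card ha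
  rw [Nat.card_Icc] at this
  omega

lemma DseqNA_eq_Dadapt (Γ : Finset ℕ → Finset ℕ) (T : ℕ → Finset ℕ) (D0 : Finset ℕ)
    (y : ℕ → Bool) (i : ℕ) :
    Dadapt Γ (fun l => T l.length) D0 y i = DseqNA Γ T D0 y i := by
  induction i with
  | zero => rfl
  | succ i ih => simp only [Dadapt, DseqNA, ih, List.length_map, List.length_range]

lemma pathSuccessful_of_NA {N n : ℕ} (h : pathNASuccessful N 1 n 4) :
    pathSuccessful N 1 n 4 := by
  obtain ⟨T, hT⟩ := h
  refine ⟨fun l => T l.length, fun y => ?_⟩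
  simpa only [DseqNA_eq_Dadapt] using hT y

/-- The optimal tests, for `M = ⌈N/2⌉`: first the left half, then everything except a middle block
of `2i` vertices. -/
def halfTest (M i : ℕ) : Finset ℕ :=
  if i = 0 then Icc 1 M else Icc 1 (M - i) ∪ Icc (M + 1 + i) (2 * M)

/-- After `i + 1` tests the candidates lie in one of two outer intervals, unless at most four
candidates were left at some point. -/
lemma halfTest_invariant {N M : ℕ} (hM : M = (N + 1) / 2) (y : ℕ → Bool) (i : ℕ) (hi : i + 3 ≤ M) :
    (∃ j ≤ i + 1, (DseqNA (GammaP N 1) (halfTest M) (Icc 1 N) y j).card ≤ 4) ∨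
      DseqNA (GammaP N 1) (halfTest M) (Icc 1 N) y (i + 1) ⊆ Icc 1 (M + 1 - i) ∨
      DseqNA (GammaP N 1) (halfTest M) (Icc 1 N) y (i + 1) ⊆ Icc (M + i) (2 * M) := by
  induction i with
  | zero =>
    right
    simp only [DseqNA, GammaP_one, halfTest]
    split
    · left
      intro x hx
      grind [mem_pathStep]
    · right
      intro x hx
      grind [mem_pathStep]
  | succ i ih =>
    -- A candidate set inside an interval of length four ends the search.
    have small : ∀ c, DseqNA (GammaP N 1) (halfTest M) (Icc 1 N) y (i + 1 + 1) ⊆ Icc c (c + 3) →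
        ∃ j ≤ i + 1 + 1, (DseqNA (GammaP N 1) (halfTest M) (Icc 1 N) y j).card ≤ 4 := by
      intro c hc
      refine ⟨i + 1 + 1, le_rfl, (card_le_card hc).trans ?_⟩
      rw [Nat.card_Icc]; omega
    rcases ih (by omega) with ⟨j, hj, hc⟩ | h | h
    · exact Or.inl ⟨j, by omega, hc⟩
    · cases hb : y (i + 1)
      · left
        apply small (M - (i + 1))
        rw [DseqNA]
        simp only [GammaP_one, halfTest, hb]
        intro x hx
        simp only [Bool.false_eq_true, if_false, mem_pathStep] at hx
        obtain ⟨hxN, z, hz, hzx⟩ := hx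
        rw [mem_sdiff] at hz
        have := mem_Icc.1 (h hz.1)
        have hz2 := hz.2
        simp only [Nat.succ_ne_zero, if_false, mem_union, mem_Icc] at hz2
        rw [mem_Icc]
        omega
      · right; left
        rw [DseqNA]
        simp only [GammaP_one, halfTest, hb]
        intro x hx
        simp only [if_true, mem_pathStep] at hx
        obtain ⟨hxN, z, hz, hzx⟩ := hx
        rw [mem_inter] at hz
        have := mem_Icc.1 (h hz.2)
        have hz2 := hz.1
        simp only [Nat.succ_ne_zero, if_false, mem_union, mem_Icc] at hz2
        rw [mem_Icc]
        omega
    · cases hb : y (i + 1)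
      · left
        apply small (M + i - 1)
        rw [DseqNA]
        simp only [GammaP_one, halfTest, hb]
        intro x hx
        simp only [Bool.false_eq_true, if_false, mem_pathStep] at hx
        obtain ⟨hxN, z, hz, hzx⟩ := hx
        rw [mem_sdiff] at hz
        have := mem_Icc.1 (h hz.1)
        have hz2 := hz.2
        simp only [Nat.succ_ne_zero, if_false, mem_union, mem_Icc] at hz2
        rw [mem_Icc]
        omega
      · right; right
        rw [DseqNA]
        simp only [GammaP_one, halfTest, hb]
        intro x hx
        simp only [if_true, mem_pathStep] at hx
        obtain ⟨hxN, z, hz, hzx⟩ := hx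
        rw [mem_inter] at hz
        have := mem_Icc.1 (h hz.2)
        have hz2 := hz.1
        simp only [Nat.succ_ne_zero, if_false, mem_union, mem_Icc] at hz2
        rw [mem_Icc]
        omega

lemma pathNASuccessful_half (N : ℕ) : pathNASuccessful N 1 ((N + 1) / 2 - 2) 4 := by
  obtain ⟨M, hM⟩ : ∃ M, M = (N + 1) / 2 := ⟨_, rfl⟩
  rw [← hM]
  refine ⟨halfTest M, fun y _ => ?_⟩
  rcases Nat.lt_or_ge M 3 with h3 | h3
  · refine ⟨0, by omega, ?_⟩
    simp only [DseqNA, Nat.card_Icc]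
    omega
  · have e : M - 3 + 1 = M - 2 := by omega
    have := halfTest_invariant hM y (M - 3) (by omega)
    rw [e] at this
    rcases this with h | h | h
    · exact h
    · refine ⟨M - 2, le_rfl, (card_le_card h).trans ?_⟩
      rw [Nat.card_Icc]; omega
    · refine ⟨M - 2, le_rfl, (card_le_card h).trans ?_⟩
      rw [Nat.card_Icc]; omega

/-- Theorem 6: for `k = 1`, the minimum number of tests of a non-adaptive
`(P_N,4)`-successful strategy is `⌈N/2⌉ - 2`; in particular it coincides with the
minimum number of tests of an adaptive `(P_N,4)`-successful strategy. -/
theorem path_nonadaptive_min_tests (N : ℕ) (hN : 1 ≤ N) :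
    IsLeast {n | pathNASuccessful N 1 n 4} ((N + 1) / 2 - 2) ∧
    sInf {n | pathNASuccessful N 1 n 4} = sInf {n | pathSuccessful N 1 n 4} := by
  have hNA : IsLeast {n | pathNASuccessful N 1 n 4} ((N + 1) / 2 - 2) :=
    ⟨pathNASuccessful_half N, fun _ h => le_of_pathSuccessful (pathSuccessful_of_NA h)⟩
  have hA : IsLeast {n | pathSuccessful N 1 n 4} ((N + 1) / 2 - 2) :=
    ⟨pathSuccessful_of_NA (pathNASuccessful_half N), fun _ h => le_of_pathSuccessful h⟩
  exact ⟨hNA, hNA.csInf_eq.trans hA.csInf_eq.symm⟩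
end

section
/- (Lower-bound half of Theorem 1.) Let $k \ge 1$, $s \ge 4k$, $n \ge 0$ and $N = 2^n(s-4k)+4k$. Then there exists a $(C_N,s)$-successful adaptive strategy with $n$ tests; in fact, the strategy that, whenever the current candidate set is an arc $\{x\oplus 1,\dots,x\oplus(2^{n-(i-1)}(s-4k)+4k)\}$ of the cycle, tests the sub-arc $\{x\oplus 1,\dots,x\oplus(2^{n-i}(s-4k)+2k)\}$ ($\oplus$ denoting addition modulo $N$), guarantees $|\mathcal{D}_i| = 2^{n-i}(s-4k)+4k$ after each test $i$, so $|\mathcal{D}_n| = s$. -/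
/-!
The candidate set is kept equal to a cyclic arc throughout. Write `m = s - 4k`. If the current arc
has length `2^(r+1) m + 4k`, testing its first half, of length `2^r m + 2k`, leaves an arc of that
length whichever answer is received (`arc_inter_first`, `arc_sdiff_first`). One move of the target
extends a nonempty arc by one vertex at each end as long as the total stays at most `N`
(`cycStep_arc`), so after `k` moves the length is `2^r m + 4k ≤ N` (`GammaC_arc`). Starting from
the whole cycle, an arc of length `N = 2^n m + 4k`, induction gives the size after each test;
after `n` tests it is `m + 4k = s`.
-/

open Finset

/-- The arc of `L` consecutive vertices of the cycle on `1, …, N` that starts at the vertex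
`x % N + 1`; thus `x` is a `0`-based offset, read modulo `N`. -/
def cycArc (N x L : ℕ) : Finset ℕ := (Finset.range L).image fun t => (x + t) % N + 1

lemma mem_cycArc {N x L v : ℕ} : v ∈ cycArc N x L ↔ ∃ t < L, (x + t) % N + 1 = v := by
  simp [cycArc]

lemma offset_inj {N x t u : ℕ} (ht : t < N) (hu : u < N) (h : (x + t) % N = (x + u) % N) :
    t = u := by
  have h' : t ≡ u [MOD N] := Nat.ModEq.add_left_cancel' x h
  rwa [Nat.ModEq, Nat.mod_eq_of_lt ht, Nat.mod_eq_of_lt hu] at h'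

lemma card_cycArc {N x L : ℕ} (hL : L ≤ N) : (cycArc N x L).card = L := by
  rw [cycArc, Finset.card_image_of_injOn, Finset.card_range]
  intro t ht u hu h
  simp only [Finset.coe_range, Set.mem_Iio] at ht hu
  exact offset_inj (by omega) (by omega) (Nat.succ_injective h)

lemma cycArc_full (N : ℕ) : cycArc N 0 N = Finset.Icc 1 N := by
  ext v
  rw [mem_cycArc, Finset.mem_Icc]
  constructor
  · rintro ⟨t, ht, rfl⟩
    rw [Nat.zero_add, Nat.mod_eq_of_lt ht]
    omega
  · rintro ⟨h1, h2⟩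
    refine ⟨v - 1, by omega, ?_⟩
    rw [Nat.zero_add, Nat.mod_eq_of_lt (by omega)]
    omega

/-- In terms of offsets, the closed neighborhood of the vertex at offset `u` consists of the
vertices at offsets `u - 1` (written `u + (N - 1)`), `u` and `u + 1`. -/
lemma neighbor_iff {N u j : ℕ} (hN : 2 ≤ N) :
    (j ∈ Finset.Icc 1 N ∧ (j = u % N + 1 ∨ u % N + 1 + 1 = j ∨ j + 1 = u % N + 1 ∨
      (u % N + 1 = N ∧ j = 1) ∨ (u % N + 1 = 1 ∧ j = N))) ↔
    ((u + (N - 1)) % N + 1 = j ∨ u % N + 1 = j ∨ (u + 1) % N + 1 = j) := by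
  have hr : u % N < N := Nat.mod_lt _ (by omega)
  have hsucc : (u + 1) % N = if u % N + 1 = N then 0 else u % N + 1 := by
    rw [← Nat.mod_add_mod]
    split_ifs with h
    · rw [h, Nat.mod_self]
    · exact Nat.mod_eq_of_lt (by omega)
  have hpred : (u + (N - 1)) % N = if u % N = 0 then N - 1 else u % N - 1 := by
    rw [← Nat.mod_add_mod]
    split_ifs with h
    · rw [h, Nat.zero_add]
      exact Nat.mod_eq_of_lt (by omega)
    · rw [show u % N + (N - 1) = (u % N - 1) + N by omega, Nat.add_mod_right]
      exact Nat.mod_eq_of_lt (by omega)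
  rw [hsucc, hpred, Finset.mem_Icc]
  split_ifs <;> omega

lemma cycStep_arc {N x L : ℕ} (hL : 1 ≤ L) (hLN : L + 2 ≤ N) :
    cycStep N (cycArc N x L) = cycArc N (x + (N - 1)) (L + 2) := by
  have hN : 2 ≤ N := by omega
  ext j
  have key : j ∈ cycStep N (cycArc N x L) ↔ ∃ t < L, ((x + t + (N - 1)) % N + 1 = j ∨
      (x + t) % N + 1 = j ∨ (x + t + 1) % N + 1 = j) := by
    simp only [← neighbor_iff hN, cycStep, Finset.mem_filter, mem_cycArc]
    constructor
    · rintro ⟨hj, _, ⟨t, ht, rfl⟩, h⟩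
      exact ⟨t, ht, hj, h⟩
    · rintro ⟨t, ht, hj, h⟩
      exact ⟨hj, _, ⟨t, ht, rfl⟩, h⟩
  have shift (a : ℕ) : (x + (N - 1) + (a + 1)) % N = (x + a) % N := by
    rw [show x + (N - 1) + (a + 1) = x + a + N by omega, Nat.add_mod_right]
  rw [key, mem_cycArc]
  constructor
  · rintro ⟨t, ht, h | h | h⟩
    · exact ⟨t, by omega, by rw [← h, Nat.add_right_comm]⟩
    · exact ⟨t + 1, by omega, by rw [shift, h]⟩
    · exact ⟨t + 1 + 1, by omega, by rw [shift, ← h, Nat.add_assoc]⟩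
  · rintro ⟨t, ht, h⟩
    -- The first vertex of the long arc is the predecessor of the first vertex of the short one,
    -- and the last vertex is the successor of the last; the others lie in the short arc.
    rcases t with _ | a
    · exact ⟨0, by omega, Or.inl (by rw [← h]; rfl)⟩
    · rw [shift] at h
      by_cases ha : a < L
      · exact ⟨a, ha, Or.inr (Or.inl h)⟩
      · refine ⟨L - 1, by omega, Or.inr (Or.inr ?_)⟩
        rw [← h, show x + (L - 1) + 1 = x + a by omega]

lemma GammaC_arc {N k x L : ℕ} (hL : 1 ≤ L) (hLN : L + 2 * k ≤ N) :
    GammaC N k (cycArc N x L) = cycArc N (x + k * (N - 1)) (L + 2 * k) := by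
  induction k with
  | zero => simp [GammaC]
  | succ k ih =>
    have ih' := ih (by omega)
    rw [GammaC] at ih' ⊢
    rw [Function.iterate_succ_apply', ih', cycStep_arc (by omega) (by omega)]
    congr 1
    ring

lemma arc_inter_first {N x a b : ℕ} :
    cycArc N x a ∩ cycArc N x (a + b) = cycArc N x a := by
  rw [Finset.inter_eq_left]
  intro v hv
  obtain ⟨t, ht, rfl⟩ := mem_cycArc.1 hv
  exact mem_cycArc.2 ⟨t, by omega, rfl⟩

lemma arc_sdiff_first {N x a b : ℕ} (h : a + b ≤ N) :
    cycArc N x (a + b) \ cycArc N x a = cycArc N (x + a) b := by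
  ext v
  rw [Finset.mem_sdiff, mem_cycArc, mem_cycArc, mem_cycArc]
  constructor
  · rintro ⟨⟨t, ht, rfl⟩, hv⟩
    have hat : a ≤ t := by
      by_contra hlt
      exact hv ⟨t, by omega, rfl⟩
    exact ⟨t - a, by omega, by rw [show x + a + (t - a) = x + t by omega]⟩
  · rintro ⟨t, ht, rfl⟩
    refine ⟨⟨a + t, by omega, by rw [Nat.add_assoc]⟩, ?_⟩
    rintro ⟨u, hu, huv⟩
    rw [Nat.add_assoc] at huv
    have := offset_inj (by omega) (by omega) (Nat.succ_injective huv)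
    omega

/-- The length of the arc tested once `i` answers are known: half of the current candidate arc.
Only `i < n` matters. -/
def testLen (k m n i : ℕ) : ℕ := 2 ^ (n - (i + 1)) * m + 2 * k

/-- The offset at which the candidate arc starts, as a function of the answers received, the most
recent one first. A negative answer skips the tested arc; the target's moves then push the start
back by `k`, encoded as an addition of `k * (N - 1)`. -/
def arcStart (N k m n : ℕ) : List Bool → ℕ
  | [] => 0
  | b :: l =>
      (if b then arcStart N k m n l else arcStart N k m n l + testLen k m n l.length) + k * (N - 1)

/-- The halving strategy: test the first half of the current candidate arc. -/
def halving (N k m n : ℕ) (l : List Bool) : Finset ℕ :=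
  cycArc N (arcStart N k m n l.reverse) (testLen k m n l.length)

/-- The invariant of the halving strategy: after each test the candidate set is an arc of the
prescribed length, for every answer sequence. -/
lemma Dadapt_halving {N k m n : ℕ} (hk : 1 ≤ k) (hN : N = 2 ^ n * m + 4 * k) (y : ℕ → Bool) :
    ∀ i ≤ n, Dadapt (GammaC N k) (halving N k m n) (Finset.Icc 1 N) y i =
      cycArc N (arcStart N k m n ((List.range i).map y).reverse) (2 ^ (n - i) * m + 4 * k) := by
  intro i
  induction i with
  | zero =>
    intro _
    simp only [Dadapt, List.range_zero, List.map_nil, List.reverse_nil, arcStart, Nat.sub_zero]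
    rw [← hN, cycArc_full]
  | succ i ih =>
    intro hi
    have hle : 2 ^ (n - i) * m ≤ 2 ^ n * m :=
      Nat.mul_le_mul_right m (Nat.pow_le_pow_right (by norm_num) (Nat.sub_le n i))
    have hlen : 2 ^ (n - i) * m + 4 * k = testLen k m n i + testLen k m n i := by
      rw [testLen, show n - i = n - (i + 1) + 1 by omega]
      ring
    have hpos : 1 ≤ testLen k m n i := by
      unfold testLen
      omega
    have hgrow : 2 ^ (n - (i + 1)) * m + 4 * k = testLen k m n i + 2 * k := by
      unfold testLen
      omega
    have hfit : testLen k m n i + 2 * k ≤ N := by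
      have h2k : 2 * k ≤ testLen k m n i := Nat.le_add_left _ _
      omega
    simp only [Dadapt]
    rw [ih (by omega), hlen, hgrow]
    simp only [halving, List.range_succ, List.map_append, List.map_cons, List.map_nil,
      List.reverse_append, List.reverse_cons, List.reverse_nil, List.nil_append,
      List.singleton_append, List.length_map, List.length_range, arcStart, List.length_reverse]
    cases y i
    · simp only [Bool.false_eq_true, if_false]
      rw [arc_sdiff_first (by omega), GammaC_arc hpos hfit]
    · simp only [if_true]
      rw [arc_inter_first, GammaC_arc hpos hfit]

lemma card_halving {N k m n : ℕ} (hk : 1 ≤ k) (hN : N = 2 ^ n * m + 4 * k) (y : ℕ → Bool)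
    {i : ℕ} (hi : i ≤ n) :
    (Dadapt (GammaC N k) (halving N k m n) (Finset.Icc 1 N) y i).card =
      2 ^ (n - i) * m + 4 * k := by
  rw [Dadapt_halving hk hN y i hi, card_cycArc]
  rw [hN]
  gcongr
  · norm_num
  · omega

/-- Lower-bound half of Theorem 1: for `N = 2^n(s-4k)+4k` there is a
`(C_N,s)`-successful strategy with `n` tests; in fact there is a strategy which,
for every consistent answer sequence, guarantees
`|𝒟_i| = 2^{n-i}(s-4k)+4k` after each test `i ≤ n` (so `|𝒟_n| = s`). -/
theorem cycle_lower_bound_strategy (k s n : ℕ) (hk : 1 ≤ k) (hs : 4 * k ≤ s) :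
    cycSuccessful (2 ^ n * (s - 4 * k) + 4 * k) k n s ∧
    ∃ σ : List Bool → Finset ℕ, ∀ y : ℕ → Bool,
      (∀ i ≤ n,
        (Dadapt (GammaC (2 ^ n * (s - 4 * k) + 4 * k) k) σ
          (Finset.Icc 1 (2 ^ n * (s - 4 * k) + 4 * k)) y i).Nonempty) →
      ∀ i ≤ n,
        (Dadapt (GammaC (2 ^ n * (s - 4 * k) + 4 * k) k) σ
          (Finset.Icc 1 (2 ^ n * (s - 4 * k) + 4 * k)) y i).card
          = 2 ^ (n - i) * (s - 4 * k) + 4 * k := by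
  refine ⟨⟨halving (2 ^ n * (s - 4 * k) + 4 * k) k (s - 4 * k) n, fun y _ => ⟨n, le_rfl, ?_⟩⟩,
    halving (2 ^ n * (s - 4 * k) + 4 * k) k (s - 4 * k) n,
    fun y _ i hi => card_halving hk rfl y hi⟩
  rw [card_halving hk rfl y le_rfl, Nat.sub_self, pow_zero, one_mul, Nat.sub_add_cancel hs]
end
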